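/- arXiv:0806.2561 — 5 statements merged into one kernel-verified Lean document; each statement's English description precedes it below -/
import Mathlib

section
/- A triplet (V, x1*, x2*) is a nontrivial solution of the free boundary problem (2.11)–(2.14) if and only if the triplet (V ∘ p⁻¹, p(x1*), p(x2*)) is a nontrivial solution of the zero-drift free boundary problem (2.35)–(2.38) on J, i.e.: Ṽ := V ∘ p⁻¹ is continuously differentiable on [p(x1*), p(x2*)] with Ṽ′(p(x1*)) = Ṽ′(p(x2*)) = 0, Ṽ′ is absolutely continuous on [p(x1*), p(x2*)], Ṽ = 0 on J ∖ (p(x1*), p(x2*)), and (σ̃²(x)/2)·Ṽ″(x) − λ·Ṽ(x) = −f̃(x) for Lebesgue-a.e. x ∈ (p(x1*), p(x2*)), where Ṽ″ is the a.e.-defined derivative of Ṽ′. -/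
/-!
The two problems are exchanged by the change of variable `y = p x`. With `B x = ∫ z in c..x, 2b/σ²`
one has `p' = exp (-B)`, so `p` is an increasing `C¹` diffeomorphism onto the open interval `J`,
with inverse `q` satisfying `q' = exp (B ∘ q)` (`inverse_facts`). Derivatives are related by
`W' = (V' ∘ q) · exp (B ∘ q)` and `V' = (W' ∘ p) · p'`.

Regularity: `B` is absolutely continuous as the primitive of a locally integrable function
(`absCont_integral`), hence so are `exp (±B)`; products and compositions with increasing Lipschitz
maps preserve absolute continuity, which transfers the `C¹` and absolute continuity conditions
in both directions (`transfer_C1`).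

Equation: by Lebesgue's differentiation theorem `B' = 2b/σ²` a.e. At such a point the product and
chain rules give `V'' = p'² · (W'' ∘ p) - (2b/σ²) · V'`, so the drift term cancels. Exceptional null
sets are carried to null sets because `p` and `q` are differentiable (`ae_pullback`).
-/

open MeasureTheory Set Filter

noncomputable section

def LocBddAt (F : ℝ → ℝ) (x : ℝ) : Prop :=
  ∃ ε > 0, ∃ C : ℝ, ∀ y ∈ Set.Ioo (x - ε) (x + ε), |F y| ≤ C

/-- shape of `f` as in Figure 1 -/
def Shape (f : ℝ → ℝ) (x1l x1r x2l x2r : ℝ) : Prop :=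
  x1l ≤ x1r ∧ x1r < x2l ∧ x2l ≤ x2r ∧
  (∀ x ∈ Set.Ioo x1r x2l, 0 < f x) ∧
  (∀ x ∈ Set.Icc x1l x1r ∪ Set.Icc x2l x2r, f x = 0) ∧
  (∀ x ∈ Set.Iio x1l ∪ Set.Ioi x2r, f x < 0)

/-- Engelbert–Schmidt condition (2.2) together with Borel measurability -/
def ES (b σ : ℝ → ℝ) : Prop :=
  Measurable b ∧ Measurable σ ∧ (∀ x, σ x ≠ 0) ∧
  LocallyIntegrable (fun x => 1 / (σ x) ^ 2) volume ∧
  LocallyIntegrable (fun x => b x / (σ x) ^ 2) volume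

/-- condition (2.3) -/
def Cond23 (f σ : ℝ → ℝ) (x1l x1r x2l x2r : ℝ) : Prop :=
  LocallyIntegrable (fun x => f x / (σ x) ^ 2) volume ∧
  ∀ x ∉ Set.Icc x1l x1r ∪ Set.Icc x2l x2r, LocBddAt (fun y => 1 / f y) x

/-- `b` is locally bounded on `ℝ` -/
def LocBdd (b : ℝ → ℝ) : Prop := ∀ x : ℝ, LocBddAt b x


/-- classical ε-δ absolute continuity of `F` on `[a,b]` -/
def AbsCont (F : ℝ → ℝ) (a b : ℝ) : Prop :=
  ∀ ε > 0, ∃ δ > 0, ∀ n : ℕ, ∀ s t : Fin n → ℝ,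
    (∀ i, a ≤ s i ∧ s i ≤ t i ∧ t i ≤ b) →
    (Pairwise fun i j => Disjoint (Set.Ioo (s i) (t i)) (Set.Ioo (s j) (t j))) →
    (∑ i, (t i - s i)) < δ → (∑ i, |F (t i) - F (s i)|) < ε

/-- a solution of the free boundary problem (2.11)–(2.14): `V = 0` outside `(x1, x2)`,
`V ∈ C¹([x1, x2])` (with one-sided derivatives at the endpoints) with
`V′(x1) = V′(x2) = 0`, `V′` absolutely continuous on `[x1, x2]`, and
`(σ²/2)·V″ + b·V′ − λ·V = −f` Lebesgue-a.e. on `(x1, x2)`, where `V″` is the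
a.e.-defined derivative of `V′`. -/
def SolFBP1114 (b σ f : ℝ → ℝ) (lam : ℝ) (V : ℝ → ℝ) (x1 x2 : ℝ) : Prop :=
  x1 < x2 ∧
  (∀ x ∉ Set.Ioo x1 x2, V x = 0) ∧
  ∃ V' : ℝ → ℝ,
    (∀ x ∈ Set.Icc x1 x2, HasDerivWithinAt V (V' x) (Set.Icc x1 x2) x) ∧
    ContinuousOn V' (Set.Icc x1 x2) ∧
    V' x1 = 0 ∧ V' x2 = 0 ∧
    AbsCont V' x1 x2 ∧
    ∀ᵐ x, x ∈ Set.Ioo x1 x2 → ∃ d, HasDerivAt V' d x ∧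
      (σ x) ^ 2 / 2 * d + b x * V' x - lam * V x = -f x

/-- a solution of the zero-drift free boundary problem (2.35)–(2.38) on the
interval `J`, for diffusion coefficient `σt` and gain function `ft`. -/
def SolFBPZeroDrift (σt ft : ℝ → ℝ) (lam : ℝ) (J : Set ℝ) (W : ℝ → ℝ) (y1 y2 : ℝ) : Prop :=
  y1 < y2 ∧
  (∀ y ∈ J \ Set.Ioo y1 y2, W y = 0) ∧
  ∃ W' : ℝ → ℝ,
    (∀ y ∈ Set.Icc y1 y2, HasDerivWithinAt W (W' y) (Set.Icc y1 y2) y) ∧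
    ContinuousOn W' (Set.Icc y1 y2) ∧
    W' y1 = 0 ∧ W' y2 = 0 ∧
    AbsCont W' y1 y2 ∧
    ∀ᵐ y, y ∈ Set.Ioo y1 y2 → ∃ d, HasDerivAt W' d y ∧
      (σt y) ^ 2 / 2 * d - lam * W y = -ft y

/-! ### Absolute continuity -/

/-- Absolute continuity in Mathlib's sense implies the `ε`-`δ` notion: for increasing pairs,
pairwise disjoint open intervals have pairwise disjoint half-open intervals. -/
theorem absCont_of_absolutelyContinuousOnInterval {F : ℝ → ℝ} {a b : ℝ}
    (h : AbsolutelyContinuousOnInterval F a b) : AbsCont F a b := by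
  rw [absolutelyContinuousOnInterval_iff] at h
  intro ε hε
  obtain ⟨δ, hδ, H⟩ := h ε hε
  refine ⟨δ, hδ, fun n s t hst hdis hsum => ?_⟩
  -- a finite family is encoded in Mathlib as a sequence, extended here by the junk value `(0, 0)`
  let E : ℕ → ℝ × ℝ := fun i => if hi : i < n then (s ⟨i, hi⟩, t ⟨i, hi⟩) else (0, 0)
  have key : ∀ G : ℝ → ℝ, ∑ i ∈ Finset.range n, dist (G (E i).1) (G (E i).2)
      = ∑ i, |G (t i) - G (s i)| := by
    intro G
    rw [Finset.sum_range]
    refine Finset.sum_congr rfl fun i _ => ?_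
    simp [E, Real.dist_eq, abs_sub_comm]
  have h1 : ((n, E) : ℕ × (ℕ → ℝ × ℝ)) ∈ AbsolutelyContinuousOnInterval.disjWithin a b := by
    refine ⟨fun i hi => ?_, ?_⟩
    · have hi' : i < n := by simpa using hi
      obtain ⟨h1, h2, h3⟩ := hst ⟨i, hi'⟩
      simp only [E, hi', dif_pos]
      exact ⟨mem_uIcc_of_le h1 (h2.trans h3), mem_uIcc_of_le (h1.trans h2) h3⟩
    · intro i hi j hj hij
      have hi' : i < n := by simpa using hi
      have hj' : j < n := by simpa using hj
      have hd := hdis (i := ⟨i, hi'⟩) (j := ⟨j, hj'⟩) (by simpa using hij)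
      simp only [Function.onFun, E, hi', hj', dif_pos]
      rw [uIoc_of_le (hst _).2.1, uIoc_of_le (hst _).2.1, Set.Ioc_disjoint_Ioc]
      exact Set.Ioo_disjoint_Ioo.1 hd
  have h2 := H (n, E) h1 (by
    have := key id
    simp only [id] at this
    rw [this]
    refine lt_of_eq_of_lt (Finset.sum_congr rfl fun i _ => ?_) hsum
    exact abs_of_nonneg (sub_nonneg.2 (hst i).2.1))
  rw [key F] at h2
  exact h2

theorem AbsCont.mul {F G : ℝ → ℝ} {a b : ℝ} (hF : AbsCont F a b) (hG : AbsCont G a b)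
    (cF : ContinuousOn F (Icc a b)) (cG : ContinuousOn G (Icc a b)) :
    AbsCont (fun x => F x * G x) a b := by
  obtain ⟨A, hA⟩ := isCompact_Icc.exists_bound_of_continuousOn cF
  obtain ⟨B, hB⟩ := isCompact_Icc.exists_bound_of_continuousOn cG
  intro ε hε
  obtain ⟨δ₁, hδ₁, H₁⟩ := hF (ε / (2 * (|B| + 1))) (by positivity)
  obtain ⟨δ₂, hδ₂, H₂⟩ := hG (ε / (2 * (|A| + 1))) (by positivity)
  refine ⟨min δ₁ δ₂, lt_min hδ₁ hδ₂, fun n s t hst hdis hsum => ?_⟩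
  have h1 := H₁ n s t hst hdis (hsum.trans_le (min_le_left _ _))
  have h2 := H₂ n s t hst hdis (hsum.trans_le (min_le_right _ _))
  rw [lt_div_iff₀ (by positivity)] at h1 h2
  have h3 : ∑ i, |F (t i) * G (t i) - F (s i) * G (s i)|
      ≤ (∑ i, |F (t i) - F (s i)|) * (|B| + 1) + (∑ i, |G (t i) - G (s i)|) * (|A| + 1) := by
    rw [Finset.sum_mul, Finset.sum_mul, ← Finset.sum_add_distrib]
    refine Finset.sum_le_sum fun i _ => ?_
    obtain ⟨e1, e2, e3⟩ := hst i
    have hb : |G (t i)| ≤ |B| + 1 := by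
      have := hB (t i) ⟨e1.trans e2, e3⟩
      rw [Real.norm_eq_abs] at this
      linarith [le_abs_self B]
    have ha : |F (s i)| ≤ |A| + 1 := by
      have := hA (s i) ⟨e1, e2.trans e3⟩
      rw [Real.norm_eq_abs] at this
      linarith [le_abs_self A]
    calc |F (t i) * G (t i) - F (s i) * G (s i)|
        = |(F (t i) - F (s i)) * G (t i) + (G (t i) - G (s i)) * F (s i)| := by ring_nf
      _ ≤ |F (t i) - F (s i)| * |G (t i)| + |G (t i) - G (s i)| * |F (s i)| := by
          rw [← abs_mul, ← abs_mul]; exact abs_add_le _ _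
      _ ≤ _ := by gcongr
  linarith

/-- Precomposition with a monotone Lipschitz map preserves absolute continuity. -/
theorem AbsCont.comp_monotoneOn {F φ : ℝ → ℝ} {a b : ℝ} {K : NNReal}
    (hF : AbsCont F (φ a) (φ b)) (hm : MonotoneOn φ (Icc a b))
    (hL : LipschitzOnWith K φ (Icc a b)) : AbsCont (fun x => F (φ x)) a b := by
  intro ε hε
  obtain ⟨δ, hδ, H⟩ := hF ε hε
  refine ⟨δ / (K + 1), by positivity, fun n s t hst hdis hsum => ?_⟩
  have hs : ∀ i, s i ∈ Icc a b := fun i => ⟨(hst i).1, (hst i).2.1.trans (hst i).2.2⟩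
  have ht : ∀ i, t i ∈ Icc a b := fun i => ⟨(hst i).1.trans (hst i).2.1, (hst i).2.2⟩
  refine H n (fun i => φ (s i)) (fun i => φ (t i)) (fun i => ?_) (fun i j hij => ?_) ?_
  · have hab : a ≤ b := (hs i).1.trans (hs i).2
    exact ⟨hm (left_mem_Icc.2 hab) (hs i) (hs i).1, hm (hs i) (ht i) (hst i).2.1,
      hm (ht i) (right_mem_Icc.2 hab) (ht i).2⟩
  · have hd := Set.Ioo_disjoint_Ioo.1 (hdis hij)
    refine Set.Ioo_disjoint_Ioo.2 ?_
    rcases min_le_iff.1 hd with h | h <;> rcases le_max_iff.1 h with h | h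
    · exact (min_le_left _ _).trans ((hm (ht i) (hs i) h).trans (le_max_left _ _))
    · exact (min_le_left _ _).trans ((hm (ht i) (hs j) h).trans (le_max_right _ _))
    · exact (min_le_right _ _).trans ((hm (ht j) (hs i) h).trans (le_max_left _ _))
    · exact (min_le_right _ _).trans ((hm (ht j) (hs j) h).trans (le_max_right _ _))
  · rw [lt_div_iff₀ (by positivity)] at hsum
    refine lt_of_le_of_lt ?_ hsum
    rw [Finset.sum_mul]
    refine Finset.sum_le_sum fun i _ => ?_
    have h1 := hL.dist_le_mul _ (ht i) _ (hs i)
    rw [Real.dist_eq, Real.dist_eq, abs_of_nonneg (sub_nonneg.2 (hst i).2.1)] at h1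
    have h2 := le_abs_self (φ (t i) - φ (s i))
    nlinarith [sub_nonneg.2 (hst i).2.1]

/-- Postcomposition with a map that is Lipschitz on the range preserves absolute continuity. -/
theorem AbsCont.lipschitz_comp {F g : ℝ → ℝ} {a b : ℝ} {K : NNReal} {S : Set ℝ}
    (hF : AbsCont F a b) (hS : MapsTo F (Icc a b) S)
    (hL : LipschitzOnWith K g S) : AbsCont (fun x => g (F x)) a b := by
  intro ε hε
  obtain ⟨δ, hδ, H⟩ := hF (ε / (K + 1)) (by positivity)
  refine ⟨δ, hδ, fun n s t hst hdis hsum => ?_⟩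
  have h := H n s t hst hdis hsum
  rw [lt_div_iff₀ (by positivity)] at h
  refine lt_of_le_of_lt ?_ h
  rw [Finset.sum_mul]
  refine Finset.sum_le_sum fun i _ => ?_
  obtain ⟨e1, e2, e3⟩ := hst i
  have h1 := hL.dist_le_mul _ (hS ⟨e1.trans e2, e3⟩) _ (hS ⟨e1, e2.trans e3⟩)
  rw [Real.dist_eq, Real.dist_eq] at h1
  nlinarith [abs_nonneg (F (t i) - F (s i))]

theorem AbsCont.exp {F : ℝ → ℝ} {a b : ℝ} (hF : AbsCont F a b)
    (cF : ContinuousOn F (Icc a b)) : AbsCont (fun x => Real.exp (F x)) a b := by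
  obtain ⟨A, hA⟩ := isCompact_Icc.exists_bound_of_continuousOn cF
  obtain ⟨K, hK⟩ := (Real.contDiff_exp (n := 1)).contDiffOn.exists_lipschitzOnWith (by decide)
    (convex_Icc (-A) A) isCompact_Icc
  exact hF.lipschitz_comp (fun x hx => abs_le.1 (hA x hx)) hK

theorem intervalIntegrable_of_locallyIntegrable {g : ℝ → ℝ} (hg : LocallyIntegrable g volume)
    (x y : ℝ) : IntervalIntegrable g volume x y :=
  intervalIntegrable_iff.2 ((hg.integrableOn_isCompact isCompact_uIcc).mono_set uIoc_subset_uIcc)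

theorem absCont_integral {g : ℝ → ℝ} (hg : LocallyIntegrable g volume) (c a b : ℝ) :
    AbsCont (fun x => ∫ z in c..x, g z) a b := by
  have hi := intervalIntegrable_of_locallyIntegrable hg
  -- the base point must lie in the interval, so the interval is first enlarged to contain `c`
  have h := ((hi (min a (min b c)) (max a (max b c))).absolutelyContinuousOnInterval_intervalIntegral
    (c := c) (by
      rw [uIcc_of_le (by simp)]
      simp))
  refine absCont_of_absolutelyContinuousOnInterval (h.mono ?_)
  rw [uIcc_of_le (a := min a (min b c)) (by simp)]
  exact uIcc_subset_Icc (by simp) (by simp)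

/-! ### Change of variable -/

/-- A property holding a.e. on `B` pulls back along `φ : A → B` when `φ` has a differentiable
left inverse on `B`, since differentiable maps send null sets to null sets. -/
theorem ae_pullback {φ ψ : ℝ → ℝ} {A B : Set ℝ} {P : ℝ → Prop}
    (hP : ∀ᵐ x, x ∈ B → P x) (hψ : DifferentiableOn ℝ ψ B) (hφ : MapsTo φ A B)
    (hinv : ∀ y ∈ A, ψ (φ y) = y) : ∀ᵐ y, y ∈ A → P (φ y) := by
  rw [ae_iff] at hP ⊢
  have h0 := addHaar_image_eq_zero_of_differentiableOn_of_addHaar_eq_zero volume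
    (hψ.mono (s := {x | ¬(x ∈ B → P x)}) (fun x hx => by
      by_contra hxB
      exact hx fun h => absurd h hxB)) hP
  refine measure_mono_null (fun y hy => ?_) h0
  have hy' : y ∈ A ∧ ¬ P (φ y) := by simpa using hy
  exact ⟨φ y, fun h => hy'.2 (h (hφ hy'.1)), hinv y hy'.1⟩

/-- The first-order part of the free boundary conditions is stable under an increasing `C¹` change
of variable `φ` whose derivative `φ'` is absolutely continuous. -/
theorem transfer_C1 {φ φ' U U' : ℝ → ℝ} {a b : ℝ}
    (hm : MonotoneOn φ (Icc a b))
    (hd : ∀ y ∈ Icc a b, HasDerivWithinAt φ (φ' y) (Icc a b) y)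
    (hc : ContinuousOn φ' (Icc a b)) (hac : AbsCont φ' a b)
    (hU : ∀ x ∈ Icc (φ a) (φ b), HasDerivWithinAt U (U' x) (Icc (φ a) (φ b)) x)
    (hUc : ContinuousOn U' (Icc (φ a) (φ b))) (hUac : AbsCont U' (φ a) (φ b)) :
    (∀ y ∈ Icc a b, HasDerivWithinAt (fun y => U (φ y)) (U' (φ y) * φ' y) (Icc a b) y) ∧
    ContinuousOn (fun y => U' (φ y) * φ' y) (Icc a b) ∧
    AbsCont (fun y => U' (φ y) * φ' y) a b := by
  have hmaps : MapsTo φ (Icc a b) (Icc (φ a) (φ b)) := fun y hy =>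
    ⟨hm (left_mem_Icc.2 (hy.1.trans hy.2)) hy hy.1,
      hm hy (right_mem_Icc.2 (hy.1.trans hy.2)) hy.2⟩
  have hφc : ContinuousOn φ (Icc a b) := fun y hy => (hd y hy).continuousWithinAt
  have hUφc : ContinuousOn (fun y => U' (φ y)) (Icc a b) := hUc.comp hφc hmaps
  obtain ⟨K, hK⟩ := isCompact_Icc.exists_bound_of_continuousOn hc
  have hL : LipschitzOnWith K.toNNReal φ (Icc a b) :=
    (convex_Icc a b).lipschitzOnWith_of_nnnorm_hasDerivWithin_le hd fun y hy => by
      rw [← NNReal.coe_le_coe, coe_nnnorm]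
      exact (hK y hy).trans (Real.le_coe_toNNReal K)
  exact ⟨fun y hy => (hU _ (hmaps hy)).comp y (hd y hy) hmaps, hUφc.mul hc,
    (hUac.comp_monotoneOn hm hL).mul hac hUφc hc⟩

/-- A map with positive derivative on `ℝ` is an increasing homeomorphism onto its open
range, with differentiable inverse; `q` is a left inverse with arbitrary values off the range. -/
theorem inverse_facts {p p' q : ℝ → ℝ} (hd : ∀ x, HasDerivAt p (p' x) x) (hpos : ∀ x, 0 < p' x)
    (hq : Function.LeftInverse q p) :
    StrictMono p ∧ (∀ x, HasDerivAt q (p' x)⁻¹ (p x)) ∧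
    ∀ x1 x2, ∀ y ∈ Icc (p x1) (p x2), ∃ x, p x = y := by
  have hm : StrictMono p := strictMono_of_hasDerivAt_pos hd hpos
  have hc : Continuous p := continuous_iff_continuousAt.2 fun x => (hd x).continuousAt
  have hsurj : ∀ x1 x2, ∀ y ∈ Icc (p x1) (p x2), ∃ x, p x = y := by
    intro x1 x2 y hy
    exact mem_range_of_exists_le_of_exists_ge hc ⟨x1, hy.1⟩ ⟨x2, hy.2⟩
  refine ⟨hm, fun x => ?_, hsurj⟩
  have hnhds : range p ∈ nhds (p x) :=
    mem_of_superset (Icc_mem_nhds (hm (sub_one_lt x)) (hm (lt_add_one x)))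
      fun y hy => hsurj _ _ y hy
  have hqm : StrictMonoOn q (range p) := by
    rintro _ ⟨u, rfl⟩ _ ⟨v, rfl⟩ huv
    rw [hq, hq]
    exact hm.lt_iff_lt.1 huv
  have hqc : ContinuousAt q (p x) := by
    refine hqm.continuousAt_of_image_mem_nhds hnhds ?_
    have : q '' range p = univ := eq_univ_of_forall fun u => ⟨p u, ⟨u, rfl⟩, hq u⟩
    rw [this]
    exact univ_mem
  refine HasDerivAt.of_local_left_inverse hqc (by rw [hq]; exact hd x) (hpos x).ne' ?_
  filter_upwards [hnhds]
  rintro _ ⟨u, rfl⟩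
  rw [hq]

/-- `(V, x1*, x2*)` is a nontrivial solution of (2.11)–(2.14) iff
`(V ∘ p⁻¹, p(x1*), p(x2*))` is a nontrivial solution of the zero-drift free boundary
problem (2.35)–(2.38) on `J`, where `p` is the scale function. -/
theorem fbp_scale_transform
    (b σ f : ℝ → ℝ) (lam : ℝ) (hlam : 0 ≤ lam)
    (hES : ES b σ) (hmf : Measurable f)
    (hfσ : LocallyIntegrable (fun x => f x / (σ x) ^ 2) volume)
    (c : ℝ)
    (p' : ℝ → ℝ) (hp' : ∀ x, p' x = Real.exp (-(∫ z in c..x, 2 * b z / (σ z) ^ 2)))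
    (p : ℝ → ℝ) (hp : ∀ x, p x = ∫ y in c..x, p' y)
    (q : ℝ → ℝ) (hq : Function.LeftInverse q p)
    (J : Set ℝ) (hJ : J = Set.range p)
    (σt : ℝ → ℝ) (hσt : ∀ y, σt y = p' (q y) * σ (q y))
    (ft : ℝ → ℝ) (hft : ∀ y, ft y = f (q y))
    (V : ℝ → ℝ) (x1 x2 : ℝ) :
    (SolFBP1114 b σ f lam V x1 x2 ∧ ∃ x, V x ≠ 0) ↔
    (SolFBPZeroDrift σt ft lam J (fun y => V (q y)) (p x1) (p x2) ∧
      ∃ y ∈ J, V (q y) ≠ 0) := by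
  obtain ⟨-, -, hσ0, -, hbσ⟩ := hES
  set g : ℝ → ℝ := fun z => 2 * b z / (σ z) ^ 2 with hgdef
  have hg : LocallyIntegrable g volume := by
    have : g = fun z => (2 : ℝ) • (b z / (σ z) ^ 2) := by
      funext z
      simp only [hgdef, smul_eq_mul]
      ring
    rw [this]
    exact hbσ.smul (2 : ℝ)
  set B : ℝ → ℝ := fun x => ∫ z in c..x, g z with hB
  have hBc : Continuous B :=
    intervalIntegral.continuous_primitive (intervalIntegrable_of_locallyIntegrable hg) c
  have hp'e : ∀ x, p' x = Real.exp (-B x) := hp'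
  have hp'f : p' = fun x => Real.exp (-B x) := funext hp'e
  have hpos : ∀ x, 0 < p' x := fun x => by rw [hp'e]; exact Real.exp_pos _
  have hinv : ∀ x, (p' x)⁻¹ = Real.exp (B x) := fun x => by rw [hp'e, Real.exp_neg, inv_inv]
  have hp'c : Continuous p' := by rw [hp'f]; fun_prop
  have hpd : ∀ x, HasDerivAt p (p' x) x := by
    intro x
    have : p = fun x => ∫ y in c..x, p' y := funext hp
    rw [this]
    exact intervalIntegral.integral_hasDerivAt_right (hp'c.intervalIntegrable _ _)
      (hp'c.stronglyMeasurableAtFilter _ _) hp'c.continuousAt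
  obtain ⟨hm, hqd, hsurj⟩ := inverse_facts hpd hpos hq
  have hBae : ∀ᵐ x, HasDerivAt B (g x) x := by
    filter_upwards [LocallyIntegrable.ae_hasDerivAt_integral hg] with x hx using hx c
  have hBac : AbsCont B x1 x2 := absCont_integral hg c x1 x2
  have hnBac : AbsCont (fun x => -B x) x1 x2 := by
    have := absCont_integral hg.neg c x1 x2
    simpa only [Pi.neg_apply, intervalIntegral.integral_neg] using this
  have hIoo : MapsTo p (Ioo x1 x2) (Ioo (p x1) (p x2)) := fun x hx => ⟨hm hx.1, hm hx.2⟩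
  have hqIoo : MapsTo q (Ioo (p x1) (p x2)) (Ioo x1 x2) := by
    intro y hy
    obtain ⟨x, rfl⟩ := hsurj _ _ y (Ioo_subset_Icc_self hy)
    rw [hq]
    exact ⟨hm.lt_iff_lt.1 hy.1, hm.lt_iff_lt.1 hy.2⟩
  have hqdiff : DifferentiableOn ℝ q (Ioo (p x1) (p x2)) := by
    intro y hy
    obtain ⟨x, rfl⟩ := hsurj _ _ y (Ioo_subset_Icc_self hy)
    exact (hqd x).differentiableAt.differentiableWithinAt
  constructor
  · rintro ⟨⟨hlt, hzero, V', hV, hVc, hV1, hV2, hVac, hode⟩, x0, hx0⟩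
    refine ⟨⟨hm hlt, ?_, fun y => V' (q y) * Real.exp (B (q y)), ?_⟩,
      p x0, hJ ▸ mem_range_self x0, by rwa [hq]⟩
    · rintro y ⟨hyJ, hy⟩
      rw [hJ] at hyJ
      obtain ⟨x, rfl⟩ := hyJ
      simp only [hq x]
      exact hzero x fun hx => hy (hIoo hx)
    have hqm : MonotoneOn q (Icc (p x1) (p x2)) := by
      intro u hu v hv huv
      obtain ⟨u, rfl⟩ := hsurj _ _ u hu
      obtain ⟨v, rfl⟩ := hsurj _ _ v hv
      rw [hq, hq]
      exact hm.le_iff_le.1 huv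
    have hqd' : ∀ y ∈ Icc (p x1) (p x2), HasDerivAt q (Real.exp (B (q y))) y := by
      intro y hy
      obtain ⟨x, rfl⟩ := hsurj _ _ y hy
      rw [hq, ← hinv]
      exact hqd x
    have hqc : ContinuousOn q (Icc (p x1) (p x2)) := fun y hy =>
      (hqd' y hy).continuousAt.continuousWithinAt
    have hexpc : ContinuousOn (fun y => Real.exp (B (q y))) (Icc (p x1) (p x2)) :=
      (Real.continuous_exp.comp hBc).comp_continuousOn hqc
    have hexpac : AbsCont (fun y => Real.exp (B (q y))) (p x1) (p x2) := by
      -- `q` is the primitive of a continuous function on a compact interval, hence Lipschitz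
      obtain ⟨K, hK⟩ := isCompact_Icc.exists_bound_of_continuousOn hexpc
      have hL : LipschitzOnWith K.toNNReal q (Icc (p x1) (p x2)) :=
        (convex_Icc _ _).lipschitzOnWith_of_nnnorm_hasDerivWithin_le
          (fun y hy => (hqd' y hy).hasDerivWithinAt) fun y hy => by
            rw [← NNReal.coe_le_coe, coe_nnnorm]
            exact (hK y hy).trans (Real.le_coe_toNNReal K)
      refine AbsCont.comp_monotoneOn (F := fun x => Real.exp (B x)) ?_ hqm hL
      rw [hq, hq]
      exact hBac.exp hBc.continuousOn
    obtain ⟨r1, r2, r3⟩ := transfer_C1 (φ := q) (φ' := fun y => Real.exp (B (q y))) (U := V)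
      (U' := V') hqm (fun y hy => (hqd' y hy).hasDerivWithinAt) hexpc hexpac
      (by rwa [hq, hq]) (by rwa [hq, hq]) (by rwa [hq, hq])
    refine ⟨r1, r2, by simp [hq x1, hV1], by simp [hq x2, hV2], r3, ?_⟩
    have hboth : ∀ᵐ x, x ∈ Ioo x1 x2 → HasDerivAt B (g x) x ∧ ∃ d, HasDerivAt V' d x ∧
        (σ x) ^ 2 / 2 * d + b x * V' x - lam * V x = -f x := by
      filter_upwards [hBae, hode] with x h1 h2 hx using ⟨h1, h2 hx⟩
    have hpdiff : DifferentiableOn ℝ p (Ioo x1 x2) := fun x _ =>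
      (hpd x).differentiableAt.differentiableWithinAt
    filter_upwards [ae_pullback hboth hpdiff hqIoo (fun y hy => by
      obtain ⟨x, rfl⟩ := hsurj _ _ y (Ioo_subset_Icc_self hy)
      rw [hq])] with y hy hyI
    obtain ⟨hBd, d, hd, heq⟩ := hy hyI
    have hqy := hqd' y (Ioo_subset_Icc_self hyI)
    refine ⟨_, (hd.comp y hqy).mul ((hBd.comp y hqy).exp), ?_⟩
    have hσy := hσ0 (q y)
    -- the term `b · V'` comes from differentiating `exp (B ∘ q)`, and `p'(q y) · q'(y) = 1`
    have hE : Real.exp (-B (q y)) * Real.exp (B (q y)) = 1 := by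
      rw [← Real.exp_add]
      simp
    simp only [Function.comp, hσt, hft, hp'e, ← heq, hgdef]
    set E := Real.exp (B (q y))
    set E' := Real.exp (-B (q y))
    have hEE : E' ^ 2 * E ^ 2 = 1 := by rw [← mul_pow, hE, one_pow]
    field_simp
    linear_combination (σ (q y) ^ 2 * d + 2 * b (q y) * V' (q y)) * hEE
  · rintro ⟨⟨hlt', hzero, W', hW, hWc, hW1, hW2, hWac, hode⟩, y0, -, hy0⟩
    have hlt : x1 < x2 := hm.lt_iff_lt.1 hlt'
    refine ⟨⟨hlt, ?_, fun x => W' (p x) * p' x, ?_⟩, q y0, hy0⟩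
    · intro x hx
      have := hzero (p x) ⟨hJ ▸ mem_range_self x, fun h => hx ?_⟩
      · simpa only [hq x] using this
      · exact ⟨hm.lt_iff_lt.1 h.1, hm.lt_iff_lt.1 h.2⟩
    obtain ⟨r1, r2, r3⟩ := transfer_C1 (φ := p) (φ' := p') (U := fun y => V (q y))
      (U' := W') (a := x1) (b := x2) (hm.monotone.monotoneOn _)
      (fun x _ => (hpd x).hasDerivWithinAt) hp'c.continuousOn
      (by rw [hp'f]; exact hnBac.exp hBc.neg.continuousOn) hW hWc hWac
    refine ⟨?_, r2, by simp [hW1], by simp [hW2], r3, ?_⟩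
    · simpa only [hq _] using r1
    filter_upwards [hBae, ae_pullback hode hqdiff hIoo (fun x _ => hq x)] with x hBd hx hxI
    obtain ⟨d, hd, heq⟩ := hx hxI
    have hp'd : HasDerivAt p' (Real.exp (-B x) * -g x) x := by
      rw [hp'f]
      exact hBd.neg.exp
    refine ⟨_, (hd.comp x (hpd x)).mul hp'd, ?_⟩
    have hσx := hσ0 x
    simp only [hσt, hft, hq x] at heq
    rw [← heq]
    simp only [Function.comp, hp'e, hgdef]
    field_simp
    ring
end
end

section
/- Assume b ≡ 0 and λ = 0. If conditions (A1), (A2) and (A3) hold, then the free boundary problem (2.11)–(2.14) has a nontrivial solution. -/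
/-!
With `P` an antiderivative of `h`, a solution on `[α, β]` is `V = P - ℓ`, where `ℓ` is a line of
slope `c` tangent to the graph of `P` at both `α` and `β`: then `V' = h - c`, `V'' = -2 f / σ²`
a.e., and `V`, `V'` vanish at `α` and `β`. So the problem is to find a bitangent of `P`, a function
which is strictly convex on `(-∞, x1l]` and on `[x2r, ∞)` with a concave stretch in between.

For slopes `c` strictly between `max (h x2r) h(-∞)` and `min (h x1l) h(∞)`, the minimum of
`P - c·id` on `[A, x1l]` and its minimum on `[x2r, B]` are attained at interior points, hence at
critical points, as soon as `-A` and `B` are large. Both minima depend continuously on `c`, so a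
bitangent exists once their difference changes sign (`exists_bitangent`). For `c` near the upper
end the right minimum is the smaller one (`exists_upper`): if `h(∞) ≥ h x1l` this is because
`h < h x1l` just to the right of the flat maximum, and otherwise it is condition (A2), truncated to
a bounded interval (`exists_integral_neg`). The lower end is the same statement for the reflected
function `x ↦ P (-x)`, with (A3) in place of (A2).
-/

open MeasureTheory Set Filter

noncomputable section

/-- a solution of the free boundary problem (2.11)–(2.14) in the case `b ≡ 0`, `λ = 0`:
`V = 0` outside `(x1, x2)`, `V ∈ C¹([x1, x2])` with `V′(x1) = V′(x2) = 0`,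
`V′` absolutely continuous on `[x1, x2]`, and `(σ²/2)·V″ = −f` Lebesgue-a.e.
on `(x1, x2)`, where `V″` is the a.e.-defined derivative of `V′`. -/
def SolFBPZero (σ f V : ℝ → ℝ) (x1 x2 : ℝ) : Prop :=
  x1 < x2 ∧
  (∀ x ∉ Set.Ioo x1 x2, V x = 0) ∧
  ∃ V' : ℝ → ℝ,
    (∀ x ∈ Set.Icc x1 x2, HasDerivWithinAt V (V' x) (Set.Icc x1 x2) x) ∧
    ContinuousOn V' (Set.Icc x1 x2) ∧
    V' x1 = 0 ∧ V' x2 = 0 ∧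
    AbsCont V' x1 x2 ∧
    ∀ᵐ x, x ∈ Set.Ioo x1 x2 → ∃ d, HasDerivAt V' d x ∧ (σ x) ^ 2 / 2 * d = -f x

lemma hasDerivAt_sub_mul {P h : ℝ → ℝ} (hP : ∀ x, HasDerivAt P (h x) x) (c x : ℝ) :
    HasDerivAt (fun y => P y - c * y) (h x - c) x :=
  ((hP x).sub ((hasDerivAt_id x).const_mul c)).congr_deriv (by simp)

/-- Mean value theorem in product form. -/
lemma exists_slope {P h : ℝ → ℝ} (hP : ∀ x, HasDerivAt P (h x) x) {x y : ℝ} (hxy : x < y) :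
    ∃ ξ ∈ Ioo x y, P y - P x = h ξ * (y - x) := by
  obtain ⟨ξ, hξ, he⟩ := exists_hasDerivAt_eq_slope P h hxy
    (fun z _ => (hP z).continuousAt.continuousWithinAt) (fun z _ => hP z)
  refine ⟨ξ, hξ, ?_⟩
  have : y - x ≠ 0 := (sub_pos.2 hxy).ne'
  rw [he]; field_simp

lemma sub_mul_le {P h : ℝ → ℝ} (hP : ∀ x, HasDerivAt P (h x) x) {x y c : ℝ} (hxy : x ≤ y)
    (hc : ∀ z ∈ Ioo x y, h z ≤ c) : P y - c * y ≤ P x - c * x := by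
  rcases hxy.eq_or_lt with rfl | hlt
  · exact le_rfl
  · obtain ⟨ξ, hξ, he⟩ := exists_slope hP hlt
    nlinarith [mul_le_mul_of_nonneg_right (hc ξ hξ) (sub_nonneg.2 hxy)]

lemma sub_mul_lt {P h : ℝ → ℝ} (hP : ∀ x, HasDerivAt P (h x) x) {x y c : ℝ} (hxy : x < y)
    (hc : ∀ z ∈ Ioo x y, h z < c) : P y - c * y < P x - c * x := by
  obtain ⟨ξ, hξ, he⟩ := exists_slope hP hxy
  nlinarith [mul_lt_mul_of_pos_right (hc ξ hξ) (sub_pos.2 hxy)]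

lemma le_sub_mul {P h : ℝ → ℝ} (hP : ∀ x, HasDerivAt P (h x) x) {x y c : ℝ} (hxy : x ≤ y)
    (hc : ∀ z ∈ Ioo x y, c ≤ h z) : P x - c * x ≤ P y - c * y := by
  rcases hxy.eq_or_lt with rfl | hlt
  · exact le_rfl
  · obtain ⟨ξ, hξ, he⟩ := exists_slope hP hlt
    nlinarith [mul_le_mul_of_nonneg_right (hc ξ hξ) (sub_nonneg.2 hxy)]

/-- The strict sign conditions on the derivative at the endpoints push the minimum of `P - c·id`
on `[a, b]` into the interior, where the derivative `h - c` vanishes. -/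
lemma interior_min {P h : ℝ → ℝ} (hP : ∀ x, HasDerivAt P (h x) x) (hcont : Continuous h)
    {a b c p : ℝ} (hab : a < b) (ha : h a < c) (hb : c < h b) (hp : p ∈ Icc a b)
    (hmin : ∀ y ∈ Icc a b, P p - c * p ≤ P y - c * y) : p ∈ Ioo a b ∧ h p = c := by
  have hpa : p ≠ a := by
    rintro rfl
    obtain ⟨u, hu, hsub⟩ := exists_Ico_subset_of_mem_nhds
      ((isOpen_Iio.preimage hcont).mem_nhds ha) ⟨b, hab⟩
    have h1 : p < min u b := lt_min hu hab
    have := sub_mul_lt hP h1 (c := c) fun z hz =>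
      hsub ⟨hz.1.le, hz.2.trans_le (min_le_left _ _)⟩
    exact absurd (hmin _ ⟨h1.le, min_le_right _ _⟩) (not_le.2 this)
  have hpb : p ≠ b := by
    rintro rfl
    obtain ⟨u, hu, hsub⟩ := exists_Ioc_subset_of_mem_nhds
      ((isOpen_Ioi.preimage hcont).mem_nhds hb) ⟨a, hab⟩
    have h1 : max u a < p := max_lt hu hab
    obtain ⟨ξ, hξ, he⟩ := exists_slope hP h1
    have h2 : c < h ξ := hsub ⟨(le_max_left _ _).trans_lt hξ.1, hξ.2.le⟩
    have h3 := hmin (max u a) ⟨le_max_right _ _, h1.le⟩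
    nlinarith [mul_lt_mul_of_pos_right h2 (sub_pos.2 h1)]
  have hmem : p ∈ Ioo a b := ⟨lt_of_le_of_ne hp.1 hpa.symm, lt_of_le_of_ne hp.2 hpb⟩
  refine ⟨hmem, ?_⟩
  have hloc : IsLocalMin (fun x => P x - c * x) p := by
    filter_upwards [Icc_mem_nhds hmem.1 hmem.2] with y hy using hmin y hy
  linarith [hloc.hasDerivAt_eq_zero (hasDerivAt_sub_mul hP c p)]

/-- If the positive part of `u` has smaller integral than its negative part on `(α, ∞)`, then the
integral of `u` over a sufficiently long bounded interval `(α, N)` is negative. -/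
lemma exists_integral_neg {u : ℝ → ℝ} (hu : Continuous u) {α : ℝ} (d : ℝ)
    (hlt : (∫⁻ y in Ioi α, ENNReal.ofReal (u y)) < ∫⁻ y in Ioi α, ENNReal.ofReal (-u y)) :
    ∃ N, d ≤ N ∧ α < N ∧ (∫ y in α..N, u y) < 0 := by
  have hmeas : Measurable fun y => ENNReal.ofReal (-u y) := by fun_prop
  have ht := (aecover_Iic (μ := volume.restrict (Ioi α)) (l := atTop) (b := fun N : ℝ => N)
    tendsto_id).lintegral_tendsto_of_countably_generated hmeas.aemeasurable
  obtain ⟨N, hN, hdN, hαN⟩ := ((ht.eventually (lt_mem_nhds hlt)).and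
    ((eventually_ge_atTop d).and (eventually_gt_atTop α))).exists
  refine ⟨N, hdN, hαN, ?_⟩
  rw [Measure.restrict_restrict measurableSet_Iic, Set.inter_comm, Ioi_inter_Iic] at hN
  have hint : Integrable u (volume.restrict (Ioc α N)) :=
    (hu.intervalIntegrable α N).1
  have hpos : (∫⁻ y in Ioc α N, ENNReal.ofReal (u y)) < ∫⁻ y in Ioc α N, ENNReal.ofReal (-u y) :=
    (lintegral_mono_set Ioc_subset_Ioi_self).trans_lt hN
  have hfin : (∫⁻ y in Ioc α N, ENNReal.ofReal (-u y)) ≠ ⊤ :=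
    hint.neg.lintegral_lt_top.ne
  rw [intervalIntegral.integral_of_le hαN.le,
    integral_eq_lintegral_pos_part_sub_lintegral_neg_part hint, sub_neg]
  exact ENNReal.toReal_strict_mono hfin hpos

/-- One-sided half of the bitangent construction. Here `P' = h`, `h` increases strictly up to `a`,
stays at the level `h a` on `[a, b]` and is below it on `(b, d]`. There are slopes `c`, arbitrarily
close to `min (h a) hp` from below, such that some point `N ≥ d` lies on or below every line of
slope `c` supporting the graph of `P` over `(-∞, a]`. -/
lemma exists_upper {P h : ℝ → ℝ} (hP : ∀ x, HasDerivAt P (h x) x) (hcont : Continuous h)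
    {a b d : ℝ} (hab : a ≤ b) (hbd : b < d) (hmono : StrictMonoOn h (Iic a))
    (hconst : ∀ x ∈ Icc a b, h x ≤ h a) (hless : ∀ x ∈ Ioc b d, h x < h a)
    {hp hm : EReal} (hhm : Tendsto (fun x => (h x : EReal)) atBot (nhds hm)) (hA1 : hm < hp)
    (hA2 : ∀ L : ℝ, hp = (L : EReal) → L < h a → ∀ α : ℝ, α < a → h α = L →
      (∫⁻ y in Set.Ioi α, ENNReal.ofReal (h y - L)) <
        ∫⁻ y in Set.Ioi α, ENNReal.ofReal (L - h y))
    {cm : ℝ} (hcm : cm < h a) (hcm' : (cm : EReal) < hp) :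
    ∃ c, cm < c ∧ c < h a ∧ (c : EReal) < hp ∧
      ∃ N, d ≤ N ∧ ∀ x ≤ a, P N - c * N ≤ P x - c * x := by
  -- The extreme slope `U = min (h a) hp`, with the point `α` where it is attained on `(-∞, a]`.
  obtain ⟨U, α, N, hcU, hUa, hUp, hαa, hα, hdN, hlt⟩ : ∃ U α N : ℝ, cm < U ∧ U ≤ h a ∧
      (U : EReal) ≤ hp ∧ α ≤ a ∧ h α = U ∧ d ≤ N ∧ P N - U * N < P α - U * α := by
    by_cases hcase : (h a : EReal) ≤ hp
    · refine ⟨h a, a, d, hcm, le_rfl, hcase, le_rfl, rfl, le_rfl, ?_⟩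
      exact (sub_mul_lt hP hbd fun z hz => hless z ⟨hz.1, hz.2.le⟩).trans_le
        (sub_mul_le hP hab fun z hz => hconst z ⟨hz.1.le, hz.2.le⟩)
    · push Not at hcase
      lift hp to ℝ using ⟨(hcase.trans_le le_top).ne, ((bot_le).trans_lt hA1).ne'⟩ with L hL
      have hLa : L < h a := by exact_mod_cast hcase
      obtain ⟨A, hA, hAa⟩ := ((hhm.eventually (gt_mem_nhds hA1)).and
        (eventually_le_atBot a)).exists
      have hAL : h A < L := by exact_mod_cast hA
      obtain ⟨α, hαm, hα⟩ := intermediate_value_Icc hAa hcont.continuousOn ⟨hAL.le, hLa.le⟩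
      have hαa : α < a := lt_of_le_of_ne hαm.2 (by rintro rfl; linarith)
      have h2 := hA2 L rfl hLa α hαa hα
      obtain ⟨N, hdN, hαN, hneg⟩ := exists_integral_neg (u := fun y => h y - L) (by fun_prop) d
        (by simpa using h2)
      refine ⟨L, α, N, by exact_mod_cast hcm', hLa.le, le_rfl, hαa.le, hα, hdN, ?_⟩
      have hi : (∫ y in α..N, h y - L) = (P N - L * N) - (P α - L * α) := by
        exact intervalIntegral.integral_eq_sub_of_hasDerivAt (f := fun x => P x - L * x)
          (fun x _ => hasDerivAt_sub_mul hP L x)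
          ((by fun_prop : Continuous fun y => h y - L).intervalIntegrable _ _)
      linarith
  -- The strict inequality at slope `U` persists for slopes `c < U` close to `U`: on `[α - 1, a]`
  -- the function `P - c·id` changes by a controlled amount, on `(-∞, α - 1]` it is decreasing.
  have hα1 : h (α - 1) < U := hα ▸ hmono (show α - 1 ≤ a by linarith) hαa (by linarith)
  have hK : Tendsto (fun c : ℝ => (U - c) * (N - α + 1)) (nhdsWithin U (Iio U)) (nhds 0) := by
    have : Continuous fun c : ℝ => (U - c) * (N - α + 1) := by fun_prop
    simpa using (this.tendsto U).mono_left nhdsWithin_le_nhds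
  have hK1 : ∀ᶠ c in nhdsWithin U (Iio U), c < U := self_mem_nhdsWithin
  have hK2 : ∀ᶠ c in nhdsWithin U (Iio U), cm < c := nhdsWithin_le_nhds (lt_mem_nhds hcU)
  have hK3 : ∀ᶠ c in nhdsWithin U (Iio U), h (α - 1) < c := nhdsWithin_le_nhds (lt_mem_nhds hα1)
  obtain ⟨c, hcK, hcU', hc1, hc2⟩ := ((hK.eventually (gt_mem_nhds (sub_pos.2 hlt))).and
    (hK1.and (hK2.and hK3))).exists
  refine ⟨c, hc1, by linarith, lt_of_lt_of_le (by exact_mod_cast hcU') hUp, N, hdN, ?_⟩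
  have hnear : ∀ x, α - 1 ≤ x → x ≤ a → P N - c * N ≤ P x - c * x := by
    intro x hx1 hxa
    have hsupp : P α - U * α ≤ P x - U * x := by
      rcases le_total x α with hx | hx
      · refine sub_mul_le hP hx fun z hz => ?_
        exact hα ▸ (hmono (hz.2.le.trans hαa) hαa hz.2).le
      · refine le_sub_mul hP hx fun z hz => ?_
        exact hα ▸ (hmono hαa (hz.2.le.trans hxa) hz.1).le
    nlinarith [mul_nonneg (sub_pos.2 hcU').le (sub_nonneg.2 hx1)]
  intro x hxa
  rcases le_total (α - 1) x with hx | hx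
  · exact hnear x hx hxa
  · refine (hnear (α - 1) le_rfl (by linarith)).trans (sub_mul_le hP hx fun z hz => ?_)
    exact (hmono (show z ≤ a by linarith [hz.2]) (show α - 1 ≤ a by linarith) hz.2).le.trans hc2.le

/-- Absolute continuity in the sense of `AbsCont` follows from Mathlib's notion: a family of
intervals indexed by `Fin n` is extended to `ℕ`, and for open intervals disjointness is the same
as for the half-open ones. -/
lemma AbsolutelyContinuousOnInterval.absCont {F : ℝ → ℝ} {a b : ℝ} (hab : a ≤ b)
    (hF : AbsolutelyContinuousOnInterval F a b) : AbsCont F a b := by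
  rw [absolutelyContinuousOnInterval_iff] at hF
  intro ε hε
  obtain ⟨δ, hδ, H⟩ := hF ε hε
  refine ⟨δ, hδ, fun n s t hst hdisj hsum => ?_⟩
  let I : ℕ → ℝ × ℝ := fun i => if hi : i < n then (s ⟨i, hi⟩, t ⟨i, hi⟩) else (a, a)
  have hI : ∀ i : Fin n, I i = (s i, t i) := fun i => by simp [I]
  have key := H (n, I) ?_ ?_
  · rw [Finset.sum_range] at key
    simpa [hI, Real.dist_eq, abs_sub_comm] using key
  · refine ⟨fun i hi => ?_, fun i hi j hj hij => ?_⟩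
    · have hi' : i < n := by simpa using hi
      obtain ⟨h1, h2, h3⟩ := hst ⟨i, hi'⟩
      change (I i).1 ∈ uIcc a b ∧ (I i).2 ∈ uIcc a b
      rw [show I i = _ from hI ⟨i, hi'⟩, uIcc_of_le hab]
      exact ⟨⟨h1, h2.trans h3⟩, ⟨h1.trans h2, h3⟩⟩
    · have hi' : i < n := by simpa using hi
      have hj' : j < n := by simpa using hj
      have hd : Disjoint (Ioo (s ⟨i, hi'⟩) (t ⟨i, hi'⟩)) (Ioo (s ⟨j, hj'⟩) (t ⟨j, hj'⟩)) :=
        hdisj (by simpa using hij)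
      change Disjoint (uIoc (I i).1 (I i).2) (uIoc (I j).1 (I j).2)
      rw [show I i = _ from hI ⟨i, hi'⟩, show I j = _ from hI ⟨j, hj'⟩,
        uIoc_of_le (hst _).2.1, uIoc_of_le (hst _).2.1]
      rw [Set.Ioo_disjoint_Ioo] at hd
      rwa [Set.Ioc_disjoint_Ioc]
  · rw [Finset.sum_range]
    refine lt_of_eq_of_lt (Finset.sum_congr rfl fun i _ => ?_) hsum
    simp only [hI]
    rw [dist_comm, Real.dist_eq, abs_of_nonneg (sub_nonneg.2 (hst i).2.1)]

/-- Existence of a bitangent of the graph of `P`. The two last hypotheses say that the minimum of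
`P - c·id` over `[A, a]` is at most its minimum over `[d, B]` for `c = c1`, and at least that for
`c = c2`. Hence both minima agree at an intermediate slope, and the endpoint conditions make the
minimizers interior critical points. -/
lemma exists_bitangent {P h : ℝ → ℝ} (hP : ∀ x, HasDerivAt P (h x) x) (hcont : Continuous h)
    {A a d B c1 c2 : ℝ} (hAa : A < a) (hdB : d < B) (hc : c1 ≤ c2)
    (hA : h A < c1) (ha : c2 < h a) (hd : h d < c1) (hB : c2 < h B)
    (h1 : ∃ N ∈ Icc A a, ∀ x ∈ Icc d B, P N - c1 * N ≤ P x - c1 * x)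
    (h2 : ∃ N ∈ Icc d B, ∀ x ∈ Icc A a, P N - c2 * N ≤ P x - c2 * x) :
    ∃ c ∈ Icc c1 c2, ∃ α ∈ Ioo A a, ∃ β ∈ Ioo d B, h α = c ∧ h β = c ∧
      P α - c * α = P β - c * β := by
  have hPc : Continuous P := continuous_iff_continuousAt.2 fun x => (hP x).continuousAt
  let Q : ℝ → ℝ → ℝ := fun c x => P x - c * x
  have hQ : Continuous ↿Q :=
    (hPc.comp continuous_snd).sub (continuous_fst.mul continuous_snd)
  have hQc : ∀ c, Continuous (Q c) := fun c => by dsimp only [Q]; fun_prop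
  let D : ℝ → ℝ := fun c => sInf (Q c '' Icc d B) - sInf (Q c '' Icc A a)
  have hD : Continuous D := (isCompact_Icc.continuous_sInf hQ).sub (isCompact_Icc.continuous_sInf hQ)
  have hbdd : ∀ c u v, BddBelow (Q c '' Icc u v) := fun c u v =>
    (isCompact_Icc.image (hQc c)).bddBelow
  have hD1 : 0 ≤ D c1 := by
    obtain ⟨N, hN, hNx⟩ := h1
    refine sub_nonneg.2 ((csInf_le (hbdd _ _ _) (mem_image_of_mem _ hN)).trans ?_)
    refine le_csInf ((nonempty_Icc.2 hdB.le).image _) ?_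
    rintro _ ⟨x, hx, rfl⟩
    exact hNx x hx
  have hD2 : D c2 ≤ 0 := by
    obtain ⟨N, hN, hNx⟩ := h2
    refine sub_nonpos.2 ((csInf_le (hbdd _ _ _) (mem_image_of_mem _ hN)).trans ?_)
    refine le_csInf ((nonempty_Icc.2 hAa.le).image _) ?_
    rintro _ ⟨x, hx, rfl⟩
    exact hNx x hx
  obtain ⟨c, hcm, hc0⟩ := intermediate_value_Icc' hc hD.continuousOn ⟨hD2, hD1⟩
  obtain ⟨α, hα, hαe, hαmin⟩ := isCompact_Icc.exists_sInf_image_eq_and_le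
    (nonempty_Icc.2 hAa.le) (hQc c).continuousOn
  obtain ⟨β, hβ, hβe, hβmin⟩ := isCompact_Icc.exists_sInf_image_eq_and_le
    (nonempty_Icc.2 hdB.le) (hQc c).continuousOn
  obtain ⟨hα1, hα2⟩ := interior_min hP hcont hAa (hA.trans_le hcm.1) (hcm.2.trans_lt ha) hα hαmin
  obtain ⟨hβ1, hβ2⟩ := interior_min hP hcont hdB (hd.trans_le hcm.1) (hcm.2.trans_lt hB) hβ hβmin
  refine ⟨c, hcm, α, hα1, β, hβ1, hα2, hβ2, ?_⟩
  have : sInf (Q c '' Icc d B) - sInf (Q c '' Icc A a) = 0 := hc0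
  rw [hαe, hβe] at this
  exact (sub_eq_zero.1 this).symm

/-- **Theorem 3.1 (sufficiency).** Case `b ≡ 0`, `λ = 0`: if conditions (A1), (A2), (A3)
hold, then the free boundary problem (2.11)–(2.14) has a nontrivial solution.
Here `h(x) = ∫_0^x (−2 f/σ²)`, `hp = h(∞)`, `hm = h(−∞)` (limits in the extended reals);
(A1) is `h(∞) > h(−∞)`; (A2) says that if `h(∞) < h(x1ℓ)` (so that `h(∞)` is a real
number `L` and the point `α_L < x1ℓ` with `h(α_L) = L` exists), then
`∫_{α_L}^∞ (h(y) − L) dy < 0` in the well-defined `[−∞, ∞)` sense, expressed via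
positive/negative parts; (A3) is symmetric. -/
theorem thm31_sufficiency
    (σ f : ℝ → ℝ) (hmσ : Measurable σ) (hmf : Measurable f) (hσ : ∀ x, σ x ≠ 0)
    (hσint : LocallyIntegrable (fun x => 1 / (σ x) ^ 2) volume)
    (x1l x1r x2l x2r : ℝ) (hf : Shape f x1l x1r x2l x2r)
    (h23 : Cond23 f σ x1l x1r x2l x2r)
    (h : ℝ → ℝ) (hh : ∀ x, h x = ∫ y in (0:ℝ)..x, -2 * f y / (σ y) ^ 2)
    (hp hm : EReal)
    (hhp : Tendsto (fun x => (h x : EReal)) atTop (nhds hp))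
    (hhm : Tendsto (fun x => (h x : EReal)) atBot (nhds hm))
    (hA1 : hm < hp)
    (hA2 : ∀ L : ℝ, hp = (L : EReal) → L < h x1l → ∀ α : ℝ, α < x1l → h α = L →
      (∫⁻ y in Set.Ioi α, ENNReal.ofReal (h y - L)) <
        ∫⁻ y in Set.Ioi α, ENNReal.ofReal (L - h y))
    (hA3 : ∀ L : ℝ, hm = (L : EReal) → h x2r < L → ∀ β : ℝ, x2r < β → h β = L →
      (∫⁻ y in Set.Iio β, ENNReal.ofReal (L - h y)) <
        ∫⁻ y in Set.Iio β, ENNReal.ofReal (h y - L)) :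
    ∃ (V : ℝ → ℝ) (x1 x2 : ℝ), SolFBPZero σ f V x1 x2 ∧ ∃ x, V x ≠ 0 := by
  obtain ⟨h1, h2, h3, hfpos, hfzero, hfneg⟩ := hf
  set g : ℝ → ℝ := fun y => -2 * f y / (σ y) ^ 2 with hg
  have hgloc : LocallyIntegrable g volume := by
    have : g = fun y => (-2 : ℝ) • (f y / (σ y) ^ 2) := by
      funext y; simp only [hg, smul_eq_mul]; ring
    rw [this]; exact h23.1.smul (-2 : ℝ)
  have hgint : ∀ u v, IntervalIntegrable g volume u v := fun u v =>
    intervalIntegrable_iff.mpr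
      ((hgloc.integrableOn_isCompact isCompact_uIcc).mono_set uIoc_subset_uIcc)
  have hheq : h = fun x => ∫ y in (0:ℝ)..x, g y := funext hh
  have hcont : Continuous h := by
    rw [hheq]; exact intervalIntegral.continuous_primitive hgint 0
  have hdiff : ∀ u v, h v - h u = ∫ y in u..v, g y := fun u v => by
    rw [hh, hh]; exact intervalIntegral.integral_interval_sub_left (hgint _ _) (hgint _ _)
  have hsq : ∀ x, 0 < (σ x) ^ 2 := fun x => by have := hσ x; positivity
  have hinc : ∀ u v, u < v → (∀ x ∈ Ioo u v, f x < 0) → h u < h v := fun u v huv hx => by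
    have := intervalIntegral.intervalIntegral_pos_of_pos_on (hgint u v)
      (fun x hxm => div_pos (by linarith [hx x hxm]) (hsq x)) huv
    linarith [hdiff u v]
  have hdec : ∀ u v, u < v → (∀ x ∈ Ioo u v, 0 < f x) → h v < h u := fun u v huv hx => by
    have := intervalIntegral.intervalIntegral_pos_of_pos_on (hgint u v).neg
      (fun x hxm => neg_pos.2 (div_neg_of_neg_of_pos (by linarith [hx x hxm]) (hsq x))) huv
    have h' := hdiff u v
    simp only [Pi.neg_apply, intervalIntegral.integral_neg] at this
    linarith
  have hflat : ∀ u v, u ≤ v → (∀ x ∈ Icc u v, f x = 0) → h v = h u := fun u v huv hx => by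
    have : (∫ y in u..v, g y) = ∫ y in u..v, (0:ℝ) :=
      intervalIntegral.integral_congr fun x hxm => by
        rw [uIcc_of_le huv] at hxm; simp [hg, hx x hxm]
    rw [intervalIntegral.integral_zero] at this
    linarith [hdiff u v]
  have hz1 : ∀ x ∈ Icc x1l x1r, h x = h x1l := fun x hx =>
    hflat _ _ hx.1 fun y hy => hfzero y (Or.inl ⟨hy.1, hy.2.trans hx.2⟩)
  have hz2 : ∀ x ∈ Icc x2l x2r, h x = h x2r := fun x hx =>
    (hflat _ _ hx.2 fun y hy => hfzero y (Or.inr ⟨hx.1.trans hy.1, hy.2⟩)).symm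
  have hx1r : h x1r = h x1l := hz1 _ ⟨h1, le_rfl⟩
  have hx2l : h x2l = h x2r := hz2 _ ⟨le_rfl, h3⟩
  have hmono1 : StrictMonoOn h (Iic x1l) := fun u _ v hv huv =>
    hinc u v huv fun x hx => hfneg x (Or.inl (hx.2.trans_le hv))
  have hmono2 : StrictMonoOn h (Ici x2r) := fun u hu v _ huv =>
    hinc u v huv fun x hx => hfneg x (Or.inr (lt_of_le_of_lt hu hx.1))
  have hmid1 : ∀ x ∈ Ioc x1r x2r, h x < h x1l := fun x hx => by
    have hcl : ∀ y ∈ Ioc x1r x2l, h y < h x1l := fun y hy =>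
      hx1r ▸ hdec _ _ hy.1 fun z hz => hfpos z ⟨hz.1, hz.2.trans_le hy.2⟩
    rcases le_total x x2l with hxl | hxl
    · exact hcl x ⟨hx.1, hxl⟩
    · rw [hz2 x ⟨hxl, hx.2⟩, ← hx2l]; exact hcl _ ⟨h2, le_rfl⟩
  have hmid2 : ∀ x ∈ Ico x1l x2l, h x2r < h x := fun x hx => by
    have hcl : ∀ y ∈ Ico x1r x2l, h x2r < h y := fun y hy =>
      hx2l ▸ hdec _ _ hy.2 fun z hz => hfpos z ⟨hy.1.trans_lt hz.1, hz.2⟩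
    rcases le_total x1r x with hxl | hxl
    · exact hcl x ⟨hxl, hx.2⟩
    · rw [hz1 x ⟨hx.1, hxl⟩, ← hx1r]; exact hcl _ ⟨le_rfl, h2⟩
  -- Since `h` is increasing beyond the flat pieces, `h(-∞) < h x1l` and `h x2r < h(∞)`.
  have hm_lt : hm < (h x1l : EReal) := by
    refine lt_of_le_of_lt (b := (h (x1l - 1) : EReal)) (le_of_tendsto hhm ?_) ?_
    · filter_upwards [eventually_le_atBot (x1l - 1)] with x hx
      exact_mod_cast hmono1.monotoneOn (show x ≤ x1l by linarith)
        (show x1l - 1 ≤ x1l by linarith) hx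
    · exact_mod_cast hmono1 (show x1l - 1 ≤ x1l by linarith) (le_refl x1l) (by linarith)
  have lt_hp : (h x2r : EReal) < hp := by
    refine lt_of_lt_of_le (b := (h (x2r + 1) : EReal)) ?_ (ge_of_tendsto hhp ?_)
    · exact_mod_cast hmono2 (le_refl x2r) (show x2r ≤ x2r + 1 by linarith) (by linarith)
    · filter_upwards [eventually_ge_atTop (x2r + 1)] with x hx
      exact_mod_cast hmono2.monotoneOn (show x2r ≤ x2r + 1 by linarith)
        (show x2r ≤ x by linarith) hx
  have hmM : h x2r < h x1l := hmid1 x2r ⟨h2.trans_le h3, le_rfl⟩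
  obtain ⟨cm, hcm1, hcm2⟩ := EReal.lt_iff_exists_real_btwn.1
    (show max hm (h x2r : EReal) < min hp (h x1l : EReal) from
      max_lt (lt_min hA1 hm_lt) (lt_min lt_hp (by exact_mod_cast hmM)))
  obtain ⟨hcma, hcmb⟩ := max_lt_iff.1 hcm1
  obtain ⟨hcmc, hcmd⟩ := lt_min_iff.1 hcm2
  have hcmb' : h x2r < cm := by exact_mod_cast hcmb
  have hcmd' : cm < h x1l := by exact_mod_cast hcmd
  set P : ℝ → ℝ := fun x => ∫ y in (0:ℝ)..x, h y with hPdef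
  have hP : ∀ x, HasDerivAt P (h x) x := fun x =>
    intervalIntegral.integral_hasDerivAt_right (hcont.intervalIntegrable _ _)
      hcont.stronglyMeasurable.stronglyMeasurableAtFilter hcont.continuousAt
  obtain ⟨c2, hc2a, hc2b, hc2c, N2, hN2, hN2x⟩ := exists_upper hP hcont h1 (h2.trans_le h3)
    hmono1 (fun x hx => (hz1 x hx).le) hmid1 hhm hA1 hA2 hcmd' hcmc
  -- The lower slope comes from the same lemma for the reflected data `x ↦ P (-x)`.
  have hPr : ∀ x, HasDerivAt (fun x => P (-x)) (-h (-x)) x := fun x =>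
    ((hP (-x)).comp x (hasDerivAt_neg x)).congr_deriv (by simp)
  have hhpr : Tendsto (fun x => ((-h (-x) : ℝ) : EReal)) atBot (nhds (-hp)) := by
    have := (continuous_neg.tendsto hp).comp (hhp.comp tendsto_neg_atBot_atTop)
    refine this.congr fun x => ?_
    simp
  obtain ⟨e, he1, he2, he3, N1, hN1, hN1x⟩ := exists_upper (P := fun x => P (-x))
    (h := fun x => -h (-x)) (a := -x2r) (b := -x2l) (d := -x1l) (hp := -hm) (hm := -hp)
    (cm := -cm) hPr (by fun_prop) (by linarith) (by linarith)
    (fun u hu v hv huv => by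
      have hu' : u ≤ -x2r := hu
      have hv' : v ≤ -x2r := hv
      exact neg_lt_neg (hmono2 (show x2r ≤ -v by linarith) (show x2r ≤ -u by linarith)
        (by linarith)))
    (fun x hx => by
      have := hz2 (-x) ⟨by linarith [hx.2], by linarith [hx.1]⟩
      simp [this])
    (fun x hx => by
      have := hmid2 (-x) ⟨by linarith [hx.2], by linarith [hx.1]⟩
      simpa using this)
    hhpr (EReal.neg_lt_neg_iff.2 hA1)
    (fun L hL hLa α hα hhα => by
      have hL' : hm = ((-L : ℝ) : EReal) := by
        rw [EReal.coe_neg, ← hL, neg_neg]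
      have key := hA3 (-L) hL' (by simp only [neg_neg] at hLa; linarith) (-α) (by linarith)
        (by linarith)
      have hrefl : ∀ u : ℝ → ENNReal,
          (∫⁻ y in Ioi α, u (-y)) = ∫⁻ y in Iio (-α), u y := fun u => by
        have := (Measure.measurePreserving_neg (volume : Measure ℝ)).setLIntegral_comp_preimage_emb
          (MeasurableEquiv.neg ℝ).measurableEmbedding u (Iio (-α))
        rw [← this]
        congr 2
        ext y; simp
      rw [← hrefl, ← hrefl] at key
      convert key using 4 <;> ring_nf)
    (by simpa using hcmb') (by rw [EReal.coe_neg]; exact EReal.neg_lt_neg_iff.2 hcma)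
  have hec : hm < ((-e : ℝ) : EReal) := by
    rw [EReal.coe_neg]; exact EReal.lt_neg_comm.1 he3
  simp only [neg_neg] at he2
  obtain ⟨A, hA, hAa, hAN⟩ := ((hhm.eventually (gt_mem_nhds hec)).and
    ((eventually_lt_atBot x1l).and (eventually_le_atBot (-N1)))).exists
  obtain ⟨B, hB, hBd, hBN⟩ := ((hhp.eventually (lt_mem_nhds hc2c)).and
    ((eventually_gt_atTop x2r).and (eventually_ge_atTop N2))).exists
  obtain ⟨c, hc, α, hα, β, hβ, hhα, hhβ, hbi⟩ := exists_bitangent hP hcont (c1 := -e) (c2 := c2)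
    hAa hBd (by linarith) (by exact_mod_cast hA) hc2b (by linarith) (by exact_mod_cast hB)
    ⟨-N1, ⟨hAN, by linarith⟩, fun x hx => by
      have := hN1x (-x) (by linarith [hx.1])
      simp only [neg_neg] at this
      linarith⟩
    ⟨N2, ⟨hN2, hBN⟩, fun x hx => hN2x x hx.2⟩
  have hαx : α < x1l := hα.2
  have hxβ : x1l < β := by linarith [hβ.1]
  have hαβ : α < β := hαx.trans hxβ
  let W : ℝ → ℝ := fun x => P x - c * x - (P α - c * α)
  have hW : ∀ x, HasDerivAt W (h x - c) x := fun x =>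
    (hasDerivAt_sub_mul hP c x).sub_const (P α - c * α)
  have hWα : W α = 0 := by simp [W]
  have hWβ : W β = 0 := by simp only [W]; linarith
  let V : ℝ → ℝ := (Ioo α β).indicator W
  have hVW : ∀ x ∈ Icc α β, V x = W x := fun x hx => by
    by_cases hxo : x ∈ Ioo α β
    · exact indicator_of_mem hxo W
    · rw [show V x = 0 from indicator_of_notMem hxo W]
      have : x = α ∨ x = β := by
        by_contra! hne
        exact hxo ⟨lt_of_le_of_ne hx.1 hne.1.symm, lt_of_le_of_ne hx.2 hne.2⟩
      rcases this with rfl | rfl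
      · exact hWα.symm
      · exact hWβ.symm
  refine ⟨V, α, β, ⟨hαβ, fun x hx => indicator_of_notMem hx W, fun x => h x - c, ?_, ?_, ?_, ?_,
    ?_, ?_⟩, ?_⟩
  · exact fun x hx => (hW x).hasDerivWithinAt.congr hVW (hVW x hx)
  · fun_prop
  · simp [hhα]
  · simp [hhβ]
  · refine AbsolutelyContinuousOnInterval.absCont hαβ.le ?_
    have hac := ((hgint α β).absolutelyContinuousOnInterval_intervalIntegral
      (c := α) left_mem_uIcc)
    have : (fun x => h x - c) = fun x => ∫ v in α..x, g v := by
      funext x; rw [← hdiff, hhα]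
    rwa [this]
  · filter_upwards [LocallyIntegrable.ae_hasDerivAt_integral hgloc] with x hx _
    refine ⟨g x, ?_, ?_⟩
    · rw [hheq]; exact (hx 0).sub_const c
    · have hs := hσ x
      simp only [hg]; field_simp
  · -- `V` cannot vanish identically, since `V' (x1l) = h x1l - c > 0`.
    by_contra! hV
    have hev : W =ᶠ[nhds x1l] fun _ => 0 := by
      filter_upwards [Icc_mem_nhds hαx hxβ] with x hx
      rw [← hVW x hx, hV x]
    have := (hW x1l).unique ((hasDerivAt_const x1l (0:ℝ)).congr_of_eventuallyEq hev)
    linarith [hc.2]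
end
end

section
/- Assume b ≡ 0 and λ = 0. If the free boundary problem (2.11)–(2.14) has a nontrivial solution, then conditions (A1), (A2) and (A3) hold. -/
/-!
Integrating the equation `V″ = −2f/σ²` twice turns the free boundary problem into two scalar
conditions. Since `V′` is absolutely continuous, `V′ = h − c` on `[x1, x2]` with `c = h x1`, so the
boundary conditions say `h x1 = h x2 = c` and `∫_{x1}^{x2} (h − c) = 0`
(`SolFBPZero.eq_integral`).

The sign pattern of `f` makes `h` strictly increasing up to `x1l`, nonincreasing on `[x1l, x2r]`,
and strictly increasing from `x2r` on. If `x1 ≥ x1l`, then `h ≤ c` on all of `[x1, x2]`, and a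
nonpositive integrand with vanishing integral forces `V = 0`; likewise `x2 ≤ x2r` gives `h ≥ c` and
`V = 0`. Hence a nontrivial solution has `x1 < x1l` and `x2r < x2`, and strict monotonicity of the
outer branches yields `h(−∞) < c < h(∞)`.

If `L = h(∞)` and `h α = L` with `α < x1l`, then `c < L` gives `x1 < α`, and
`∫_α^{x2} (h − L) < ∫_α^{x2} (h − c) = −∫_{x1}^α (h − c) ≤ 0`. Beyond `x2` the function `h` stays
below `L`, so the tail can only increase the negative part. The condition at `−∞` is symmetric.
-/

open MeasureTheory Set Filter

noncomputable section

lemma intervalIntegral_nonpos {u : ℝ → ℝ} {a b : ℝ} (hab : a ≤ b)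
    (hu : ∀ y ∈ Icc a b, u y ≤ 0) : ∫ y in a..b, u y ≤ 0 := by
  have := intervalIntegral.integral_nonneg (f := fun y => -u y) (μ := volume) hab
    (fun y hy => neg_nonneg.2 (hu y hy))
  rw [intervalIntegral.integral_neg] at this
  linarith

/-- The `ε`-`δ` definition of absolute continuity over finite families of ordered intervals
implies Mathlib's, which allows the endpoints of each interval in either order. -/
lemma AbsCont.absolutelyContinuousOnInterval {F : ℝ → ℝ} {a b : ℝ} (hab : a ≤ b)
    (hF : AbsCont F a b) : AbsolutelyContinuousOnInterval F a b := by
  rw [absolutelyContinuousOnInterval_iff]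
  intro ε hε
  obtain ⟨δ, hδ, H⟩ := hF ε hε
  refine ⟨δ, hδ, ?_⟩
  rintro ⟨n, I⟩ hE hlen
  obtain ⟨hmem, hdisj⟩ := hE
  simp only [Finset.mem_range, uIcc_of_le hab] at hmem
  have key := H n (fun i => min (I i).1 (I i).2) (fun i => max (I i).1 (I i).2)
    (fun i => by
      obtain ⟨h1, h2⟩ := hmem i i.2
      exact ⟨le_min h1.1 h2.1, min_le_max, max_le h1.2 h2.2⟩)
    (fun i j hij => by
      have := hdisj (by simp : (i : ℕ) ∈ (Finset.range n : Set ℕ))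
        (by simp : (j : ℕ) ∈ (Finset.range n : Set ℕ)) (fun h => hij (Fin.ext h))
      exact this.mono Ioo_subset_Ioc_self Ioo_subset_Ioc_self)
    (by
      simp only [max_sub_min_eq_abs']
      rw [Fin.sum_univ_eq_sum_range (fun i => |(I i).1 - (I i).2|) n]
      simpa [Real.dist_eq] using hlen)
  have e : ∀ i : ℕ, |F (max (I i).1 (I i).2) - F (min (I i).1 (I i).2)|
      = dist (F (I i).1) (F (I i).2) := by
    intro i
    rcases le_total (I i).1 (I i).2 with h | h
    · simp [h, Real.dist_eq, abs_sub_comm]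
    · simp [h, Real.dist_eq]
  simp only [e] at key
  rwa [Fin.sum_univ_eq_sum_range (fun i => dist (F (I i).1) (F (I i).2)) n] at key

/-- The first integral of the equation: the boundary values of `h` agree, and `V` is the
primitive of `h - h x1` vanishing at `x1`. -/
lemma SolFBPZero.eq_integral {σ f V h : ℝ → ℝ} {x1 x2 : ℝ} (hσ : ∀ x, σ x ≠ 0)
    (hdiff : ∀ a b, ∫ y in a..b, -2 * f y / (σ y) ^ 2 = h b - h a)
    (hsol : SolFBPZero σ f V x1 x2) :
    h x2 = h x1 ∧ ∀ x ∈ Icc x1 x2, V x = ∫ y in x1..x, (h y - h x1) := by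
  obtain ⟨h12, hV0, V', hder, hcont, hV'1, hV'2, hac, hode⟩ := hsol
  have hAC := hac.absolutelyContinuousOnInterval h12.le
  have hV' : ∀ x ∈ Icc x1 x2, V' x = h x - h x1 := by
    intro x hx
    have hsub : uIcc x1 x ⊆ uIcc x1 x2 := by
      rw [uIcc_of_le hx.1, uIcc_of_le h12.le]
      exact Icc_subset_Icc_right hx.2
    have h1 := (hAC.mono hsub).integral_deriv_eq_sub
    rw [hV'1, sub_zero] at h1
    rw [← h1, ← hdiff]
    apply intervalIntegral.integral_congr_ae
    have hne : ∀ᵐ y : ℝ, y ≠ x2 := by simp [ae_iff]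
    filter_upwards [hode, hne] with y hy hy2 hyx
    rw [uIoc_of_le hx.1] at hyx
    obtain ⟨d, hd, hd'⟩ := hy ⟨hyx.1, lt_of_le_of_ne (hyx.2.trans hx.2) hy2⟩
    rw [hd.deriv, eq_div_iff (pow_ne_zero 2 (hσ y))]
    linarith
  refine ⟨by linarith [hV' x2 (right_mem_Icc.2 h12.le)], fun x hx => ?_⟩
  have hsub : Icc x1 x ⊆ Icc x1 x2 := Icc_subset_Icc_right hx.2
  have h1 : ∫ y in x1..x, V' y = V x - V x1 := by
    apply intervalIntegral.integral_eq_sub_of_hasDerivAt_of_le hx.1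
    · exact fun y hy => ((hder y (hsub hy)).continuousWithinAt).mono hsub
    · intro y hy
      exact (hder y (hsub (Ioo_subset_Icc_self hy))).hasDerivAt
        (Icc_mem_nhds hy.1 (hy.2.trans_le hx.2))
    · apply ContinuousOn.intervalIntegrable
      rw [uIcc_of_le hx.1]
      exact hcont.mono hsub
  rw [hV0 x1 (by simp), sub_zero] at h1
  rw [← h1]
  apply intervalIntegral.integral_congr
  intro y hy
  rw [uIcc_of_le hx.1] at hy
  exact hV' y (hsub hy)

/-- If `∫_a^b u < 0` and `u ≤ 0` on `S` outside `(a, b)`, then on `S` the positive part of `u` has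
smaller integral than the negative part. The negative part may have infinite integral over `S`. -/
lemma lintegral_pos_lt_lintegral_neg {u : ℝ → ℝ} (hu : Continuous u) {a b : ℝ} (hab : a ≤ b)
    {S : Set ℝ} (hS : Ioo a b ⊆ S) (hneg : ∀ y ∈ S, y ∉ Ioo a b → u y ≤ 0)
    (hmS : MeasurableSet S) (hint : ∫ y in a..b, u y < 0) :
    (∫⁻ y in S, ENNReal.ofReal (u y)) < ∫⁻ y in S, ENNReal.ofReal (-u y) := by
  have hI : Integrable u (volume.restrict (Ioo a b)) :=
    (hu.integrableOn_Icc (a := a) (b := b)).mono_set Ioo_subset_Icc_self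
  rw [intervalIntegral.integral_of_le hab, integral_Ioc_eq_integral_Ioo,
    integral_eq_lintegral_pos_part_sub_lintegral_neg_part hI, sub_neg] at hint
  replace hint := (ENNReal.toReal_lt_toReal hI.lintegral_lt_top.ne
    hI.neg.lintegral_lt_top.ne).1 hint
  calc (∫⁻ y in S, ENNReal.ofReal (u y))
      ≤ (∫⁻ y in Ioo a b, ENNReal.ofReal (u y))
        + ∫⁻ y in S \ Ioo a b, ENNReal.ofReal (u y) := by
        rw [← union_sdiff_cancel hS]
        simpa using lintegral_union_le (μ := volume) (fun y => ENNReal.ofReal (u y)) (Ioo a b)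
          (S \ Ioo a b)
    _ = ∫⁻ y in Ioo a b, ENNReal.ofReal (u y) := by
        rw [setLIntegral_eq_zero (hmS.diff measurableSet_Ioo), add_zero]
        intro y hy
        simpa using hneg y hy.1 hy.2
    _ < ∫⁻ y in Ioo a b, ENNReal.ofReal (-u y) := hint
    _ ≤ ∫⁻ y in S, ENNReal.ofReal (-u y) := lintegral_mono_set hS

/-- **Theorem 3.1 (necessity).** Case `b ≡ 0`, `λ = 0`: if the free boundary problem
(2.11)–(2.14) has a nontrivial solution, then conditions (A1), (A2), (A3) hold.
Here `h(x) = ∫_0^x (−2 f/σ²)`, `hp = h(∞)`, `hm = h(−∞)` (limits in the extended reals). -/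
theorem thm31_necessity
    (σ f : ℝ → ℝ) (hmσ : Measurable σ) (hmf : Measurable f) (hσ : ∀ x, σ x ≠ 0)
    (hσint : LocallyIntegrable (fun x => 1 / (σ x) ^ 2) volume)
    (x1l x1r x2l x2r : ℝ) (hf : Shape f x1l x1r x2l x2r)
    (h23 : Cond23 f σ x1l x1r x2l x2r)
    (h : ℝ → ℝ) (hh : ∀ x, h x = ∫ y in (0:ℝ)..x, -2 * f y / (σ y) ^ 2)
    (hp hm : EReal)
    (hhp : Tendsto (fun x => (h x : EReal)) atTop (nhds hp))
    (hhm : Tendsto (fun x => (h x : EReal)) atBot (nhds hm))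
    (V : ℝ → ℝ) (x1 x2 : ℝ)
    (hsol : SolFBPZero σ f V x1 x2) (hnt : ∃ x, V x ≠ 0) :
    hm < hp ∧
    (∀ L : ℝ, hp = (L : EReal) → L < h x1l → ∀ α : ℝ, α < x1l → h α = L →
      (∫⁻ y in Set.Ioi α, ENNReal.ofReal (h y - L)) <
        ∫⁻ y in Set.Ioi α, ENNReal.ofReal (L - h y)) ∧
    (∀ L : ℝ, hm = (L : EReal) → h x2r < L → ∀ β : ℝ, x2r < β → h β = L →
      (∫⁻ y in Set.Iio β, ENNReal.ofReal (L - h y)) <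
        ∫⁻ y in Set.Iio β, ENNReal.ofReal (h y - L)) := by
  obtain ⟨h1lr, h1r2l, h2lr, hfpos, hfzero, hfneg⟩ := hf
  have hg : LocallyIntegrable (fun y => -2 * f y / (σ y) ^ 2) volume := by
    have := h23.1.smul (-2 : ℝ)
    convert this using 2 with y
    simp
    ring
  have hgi : ∀ a b, IntervalIntegrable (fun y => -2 * f y / (σ y) ^ 2) volume a b :=
    fun a b => (hg.integrableOn_isCompact isCompact_uIcc).intervalIntegrable
  have hdiff : ∀ a b, ∫ y in a..b, -2 * f y / (σ y) ^ 2 = h b - h a := by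
    intro a b
    rw [hh a, hh b, intervalIntegral.integral_interval_sub_left (hgi _ _) (hgi _ _)]
  have hcont : Continuous h := by
    have : h = fun x => ∫ y in (0:ℝ)..x, -2 * f y / (σ y) ^ 2 := funext hh
    rw [this]
    exact intervalIntegral.continuous_primitive hgi 0
  have hσ2 : ∀ y, 0 < (σ y) ^ 2 := fun y => by have := hσ y; positivity
  have hstrict : ∀ a b, a < b → (∀ y ∈ Ioo a b, f y < 0) → h a < h b := by
    intro a b hab hy
    rw [← sub_pos, ← hdiff]
    exact intervalIntegral.intervalIntegral_pos_of_pos_on (hgi a b)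
      (fun y hy' => div_pos (by linarith [hy y hy']) (hσ2 y)) hab
  have hup1 : StrictMonoOn h (Iic x1l) := fun a _ b hb hab =>
    hstrict a b hab fun y hy => hfneg y (Or.inl (lt_of_lt_of_le hy.2 hb))
  have hup2 : StrictMonoOn h (Ici x2r) := fun a ha b _ hab =>
    hstrict a b hab fun y hy => hfneg y (Or.inr (lt_of_le_of_lt ha hy.1))
  have hdown : AntitoneOn h (Icc x1l x2r) := by
    intro a ha b hb hab
    rw [← sub_nonpos, ← hdiff]
    apply intervalIntegral_nonpos hab
    intro y hy
    have hy1 : x1l ≤ y := ha.1.trans hy.1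
    have hy2 : y ≤ x2r := hy.2.trans hb.2
    have : 0 ≤ f y := by
      rcases le_or_gt y x1r with h1 | h1
      · exact (hfzero y (Or.inl ⟨hy1, h1⟩)).ge
      rcases lt_or_ge y x2l with h2 | h2
      · exact (hfpos y ⟨h1, h2⟩).le
      · exact (hfzero y (Or.inr ⟨h2, hy2⟩)).ge
    exact div_nonpos_of_nonpos_of_nonneg (by linarith) (hσ2 y).le
  obtain ⟨h21, hV⟩ := hsol.eq_integral hσ hdiff
  obtain ⟨h12, hV0, -⟩ := hsol
  have hii : ∀ c a b : ℝ, IntervalIntegrable (fun y => h y - c) volume a b :=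
    fun c a b => (hcont.sub continuous_const).intervalIntegrable a b
  have htot : ∫ y in x1..x2, (h y - h x1) = 0 := by
    rw [← hV x2 (right_mem_Icc.2 h12.le), hV0 x2 (by simp)]
  obtain ⟨x0, hx0⟩ := hnt
  have hx0m : x0 ∈ Ioo x1 x2 := by
    by_contra hcon
    exact hx0 (hV0 x0 hcon)
  have hVx0 := hV x0 (Ioo_subset_Icc_self hx0m)
  have hsplit : ∀ z, (∫ y in x1..z, (h y - h x1)) + ∫ y in z..x2, (h y - h x1) = 0 := fun z => by
    rw [intervalIntegral.integral_add_adjacent_intervals (hii _ _ _) (hii _ _ _), htot]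
  have hsplit0 := hsplit x0
  -- `h - h x1` has no constant sign on `[x1, x2]`, since `V x0 ≠ 0`.
  have hnle : ¬ ∀ y ∈ Icc x1 x2, h y ≤ h x1 := by
    intro hle
    have e1 : ∫ y in x1..x0, (h y - h x1) ≤ 0 := intervalIntegral_nonpos hx0m.1.le
      fun y hy => sub_nonpos.2 (hle y ⟨hy.1, hy.2.trans hx0m.2.le⟩)
    have e2 : ∫ y in x0..x2, (h y - h x1) ≤ 0 := intervalIntegral_nonpos hx0m.2.le
      fun y hy => sub_nonpos.2 (hle y ⟨hx0m.1.le.trans hy.1, hy.2⟩)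
    exact hx0 (by linarith)
  have hnge : ¬ ∀ y ∈ Icc x1 x2, h x1 ≤ h y := by
    intro hle
    have e1 : 0 ≤ ∫ y in x1..x0, (h y - h x1) := intervalIntegral.integral_nonneg hx0m.1.le
      fun y hy => sub_nonneg.2 (hle y ⟨hy.1, hy.2.trans hx0m.2.le⟩)
    have e2 : 0 ≤ ∫ y in x0..x2, (h y - h x1) := intervalIntegral.integral_nonneg hx0m.2.le
      fun y hy => sub_nonneg.2 (hle y ⟨hx0m.1.le.trans hy.1, hy.2⟩)
    exact hx0 (by linarith)
  have hx1 : x1 < x1l := by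
    by_contra! hcon
    apply hnle
    intro y hy
    rcases le_total y x2r with hy2 | hy2
    · exact hdown ⟨hcon, hy.1.trans hy2⟩ ⟨hcon.trans hy.1, hy2⟩ hy.1
    · rw [← h21]
      exact hup2.monotoneOn hy2 (hy2.trans hy.2) hy.2
  have hx2 : x2r < x2 := by
    by_contra! hcon
    apply hnge
    intro y hy
    rcases le_total y x1l with hy2 | hy2
    · exact hup1.monotoneOn (hy.1.trans hy2) hy2 hy.1
    · rw [← h21]
      exact hdown ⟨hy2, hy.2.trans hcon⟩ ⟨hy2.trans hy.2, hcon⟩ hy.2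
  have hpge : ∀ y, x2r ≤ y → (h y : EReal) ≤ hp := by
    intro y hy
    refine ge_of_tendsto hhp ?_
    filter_upwards [eventually_ge_atTop y] with z hz
    exact EReal.coe_le_coe_iff.2 (hup2.monotoneOn hy (hy.trans hz) hz)
  have hmle : ∀ y, y ≤ x1l → hm ≤ (h y : EReal) := by
    intro y hy
    refine le_of_tendsto hhm ?_
    filter_upwards [eventually_le_atBot y] with z hz
    exact EReal.coe_le_coe_iff.2 (hup1.monotoneOn (hz.trans hy) hy hz)
  have hmlt : hm < (h x1 : EReal) := (hmle (x1 - 1) (by linarith)).trans_lt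
    (EReal.coe_lt_coe_iff.2 (hup1 (mem_Iic.2 (by linarith)) hx1.le (by linarith)))
  have hltp : (h x1 : EReal) < hp := by
    rw [← h21]
    exact (EReal.coe_lt_coe_iff.2 (hup2 hx2.le (mem_Ici.2 (by linarith)) (lt_add_one x2))).trans_le
      (hpge (x2 + 1) (by linarith))
  refine ⟨hmlt.trans hltp, ?_, ?_⟩
  · intro L hL _ α hα hαL
    have hcL : h x1 < L := by rw [hL] at hltp; exact_mod_cast hltp
    have hx1α : x1 < α := by
      rw [← hup1.lt_iff_lt hx1.le hα.le, hαL]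
      exact hcL
    have hαx2 : α < x2 := by linarith
    have e1 : 0 ≤ ∫ y in x1..α, (h y - h x1) := intervalIntegral.integral_nonneg hx1α.le
      fun y hy => sub_nonneg.2 (hup1.monotoneOn hx1.le (hy.2.trans hα.le) hy.1)
    have e2 : (∫ y in α..x2, (h y - h x1)) - ∫ y in α..x2, (h y - L) = (x2 - α) * (L - h x1) := by
      rw [← intervalIntegral.integral_sub (hii _ _ _) (hii _ _ _)]
      simp
      ring
    have e3 : 0 < (x2 - α) * (L - h x1) := mul_pos (sub_pos.2 hαx2) (sub_pos.2 hcL)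
    have key := lintegral_pos_lt_lintegral_neg (u := fun y => h y - L)
      (hcont.sub continuous_const) hαx2.le (S := Ioi α) (fun y hy => hy.1)
      (fun y hy hy' => by
        have hy2 : x2 ≤ y := not_lt.1 fun hlt => hy' ⟨hy, hlt⟩
        have := hpge y (hx2.le.trans hy2)
        rw [hL] at this
        exact sub_nonpos.2 (by exact_mod_cast this))
      measurableSet_Ioi (by linarith [hsplit α])
    simpa only [neg_sub] using key
  · intro L hL _ β hβ hβL
    have hcL : L < h x1 := by rw [hL] at hmlt; exact_mod_cast hmlt
    have hβx2 : β < x2 := by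
      rw [← hup2.lt_iff_lt hβ.le hx2.le, hβL, h21]
      exact hcL
    have hx1β : x1 < β := by linarith
    have e1 : ∫ y in β..x2, (h y - h x1) ≤ 0 := intervalIntegral_nonpos hβx2.le
      fun y hy => by
        rw [← h21]
        exact sub_nonpos.2 (hup2.monotoneOn (hβ.le.trans hy.1) hx2.le hy.2)
    have e2 : (∫ y in x1..β, (L - h y)) + ∫ y in x1..β, (h y - h x1) = (β - x1) * (L - h x1) := by
      rw [← intervalIntegral.integral_add
        (Continuous.intervalIntegrable (by fun_prop) _ _) (hii _ _ _)]
      simp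
      ring
    have e3 : (β - x1) * (L - h x1) < 0 := mul_neg_of_pos_of_neg (sub_pos.2 hx1β) (sub_neg.2 hcL)
    have key := lintegral_pos_lt_lintegral_neg (u := fun y => L - h y)
      (continuous_const.sub hcont) hx1β.le (S := Iio β) (fun y hy => hy.2)
      (fun y hy hy' => by
        have hy2 : y ≤ x1 := not_lt.1 fun hlt => hy' ⟨hlt, hy⟩
        have := hmle y (hy2.trans hx1.le)
        rw [hL] at this
        exact sub_nonpos.2 (by exact_mod_cast this))
      measurableSet_Iio (by linarith [hsplit β])
    simpa only [neg_sub] using key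
end
end

section
/- Assume b ≡ 0 and λ = 0 and that conditions (A1), (A2) and (A3) hold. Set m1 = max(h(x2r), h(−∞)) and m2 = min(h(x1ℓ), h(∞)). Then there exists c* ∈ (m1, m2) with ∫_{α_{c*}}^{β_{c*}} H(y, c*) dy = 0, and the triplet (V, α_{c*}, β_{c*}) with V(x) = ∫_{α_{c*}}^x H(y, c*) dy for x ∈ (α_{c*}, β_{c*}) and V(x) = 0 otherwise is a nontrivial solution of the free boundary problem (2.11)–(2.14); moreover, it is the unique nontrivial solution. -/
/-!
Write `g = -2f/σ²` and let `h` be its primitive. The sign pattern of `f` makes `h` N-shaped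
(`nshape_h`): increasing, flat, decreasing, flat, increasing. For a level `t` strictly between the
limits and the local extrema, let `α_t < x1l` and `β_t > x2r` be the outer crossings and
`G(t) = ∫_{α_t}^{β_t} (h - t)` the signed area.

*Existence.* By `NShape.split`, `G(t)` is the area of `h` above `t` minus the area below `t`, each
over an interval that can be kept fixed as `t` varies, so `G` is continuous. It is negative
for levels near the upper end of the admissible range (`NShape.exists_neg`, where the condition at
`+∞` enters) and, by the reflection `h ↦ -h(-·)`, positive near the lower end
(`NShape.exists_pos`). Hence `G` vanishes somewhere (`NShape.exists_zero`), and the primitive of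
`h - t` is then a solution (`solution_of_area_zero`).

*Uniqueness.* The fundamental theorem of calculus for absolutely continuous functions shows that a
solution on `[y1, y2]` has derivative `h - h y1` (`solution_deriv`); thus `h y1 = h y2` and the
signed area over `[y1, y2]` is zero. To the right of `x1l` the function `h` is quasi-convex, so
`y1 ≥ x1l` would force `h` to be constant on `[y1, y2]` and the solution to be trivial; hence
`y1 < x1l` (`NShape.start_lt`), and symmetrically `y2 > x2r`. So `y1`, `y2` are the outer
crossings of a level with `G = 0`, and `G` is strictly decreasing (`NShape.area_strictAnti`).
-/

open MeasureTheory Set Filter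

noncomputable section

/-! ### N-shaped functions -/

/-- A continuous function `h` on the line is N-shaped with break points `a ≤ b < c ≤ d` when it is
strictly increasing on `(-∞, a]`, constant on `[a, b]`, strictly decreasing on `[b, c]`, constant
on `[c, d]` and strictly increasing on `[d, ∞)`. -/
structure NShape (h : ℝ → ℝ) (a b c d : ℝ) : Prop where
  cont : Continuous h
  hab : a ≤ b
  hbc : b < c
  hcd : c ≤ d
  mono_left : StrictMonoOn h (Iic a)
  const_left : ∀ x ∈ Icc a b, h x = h a
  anti : StrictAntiOn h (Icc b c)
  const_right : ∀ x ∈ Icc c d, h x = h d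
  mono_right : StrictMonoOn h (Ici d)

namespace NShape

variable {h : ℝ → ℝ} {a b c d : ℝ}

/-- The class of N-shaped functions is stable under `h ↦ -h(-·)`, which exchanges the two ends of
the line; it turns every statement about the right end into one about the left end. -/
lemma reflect (H : NShape h a b c d) :
    NShape (fun x => -h (-x)) (-d) (-c) (-b) (-a) where
  cont := (H.cont.comp continuous_neg).neg
  hab := neg_le_neg H.hcd
  hbc := neg_lt_neg H.hbc
  hcd := neg_le_neg H.hab
  mono_left := fun x hx y hy hxy => by
    have := @NShape.mono_right _ _ _ _ _ H (-y) (by simp at *; linarith) (-x) (by simp at *; linarith)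
      (by linarith)
    simpa using this
  const_left := fun x hx => by
    have := H.const_right (-x) ⟨by linarith [hx.2], by linarith [hx.1]⟩
    simpa using this
  anti := fun x hx y hy hxy => by
    have := @NShape.anti _ _ _ _ _ H (-y) ⟨by linarith [hy.2], by linarith [hy.1]⟩ (-x)
      ⟨by linarith [hx.2], by linarith [hx.1]⟩ (by linarith)
    simpa using this
  const_right := fun x hx => by
    have := H.const_left (-x) ⟨by linarith [hx.2], by linarith [hx.1]⟩
    simpa using this
  mono_right := fun x hx y hy hxy => by
    have := @NShape.mono_left _ _ _ _ _ H (-y) (by simp at *; linarith) (-x) (by simp at *; linarith)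
      (by linarith)
    simpa using this

lemma hb (H : NShape h a b c d) : h b = h a := H.const_left b ⟨H.hab, le_rfl⟩
lemma hc (H : NShape h a b c d) : h c = h d := H.const_right c ⟨le_rfl, H.hcd⟩

/-- On `[a, d]` the function is (weakly) decreasing. -/
lemma antitoneOn (H : NShape h a b c d) : AntitoneOn h (Icc a d) := by
  have h1 : AntitoneOn h (Icc a b) := fun x hx y hy _ => by
    rw [H.const_left x hx, H.const_left y hy]
  have h2 : AntitoneOn h (Icc c d) := fun x hx y hy _ => by
    rw [H.const_right x hx, H.const_right y hy]
  have h3 : AntitoneOn h (Icc a c) := by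
    have := h1.union_right H.anti.antitoneOn (isGreatest_Icc H.hab) (isLeast_Icc H.hbc.le)
    rwa [Icc_union_Icc_eq_Icc H.hab H.hbc.le] at this
  have := h3.union_right h2 (isGreatest_Icc (H.hab.trans H.hbc.le)) (isLeast_Icc H.hcd)
  rwa [Icc_union_Icc_eq_Icc (H.hab.trans H.hbc.le) H.hcd] at this

lemma had (H : NShape h a b c d) : a < d := H.hab.trans_lt (H.hbc.trans_le H.hcd)

lemma lt_top (H : NShape h a b c d) : h d < h a := by
  rw [← H.hb, ← H.hc]
  exact H.anti ⟨le_rfl, H.hbc.le⟩ ⟨H.hbc.le, le_rfl⟩ H.hbc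

/-- Beyond `a` the function is quasi-convex: it lies below the larger of its endpoint values. -/
lemma le_of_ge (H : NShape h a b c d) {y z x t : ℝ} (hy : a ≤ y) (hx : x ∈ Icc y z)
    (h1 : h y ≤ t) (h2 : h z ≤ t) : h x ≤ t := by
  rcases le_total x d with hxd | hxd
  · exact (H.antitoneOn ⟨hy, hx.1.trans hxd⟩ ⟨hy.trans hx.1, hxd⟩ hx.1).trans h1
  · exact (H.mono_right.monotoneOn hxd (hxd.trans hx.2 : d ≤ z) hx.2).trans h2

/-- Before `d` the function is quasi-concave. -/
lemma ge_of_le (H : NShape h a b c d) {y z x t : ℝ} (hz : z ≤ d) (hx : x ∈ Icc y z)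
    (h1 : t ≤ h y) (h2 : t ≤ h z) : t ≤ h x := by
  have := H.reflect.le_of_ge (y := -z) (z := -y) (x := -x) (t := -t) (neg_le_neg hz)
    ⟨neg_le_neg hx.2, neg_le_neg hx.1⟩ (by simpa using h2) (by simpa using h1)
  simpa using this

lemma ii {g : ℝ → ℝ} (hg : Continuous g) (x y : ℝ) : IntervalIntegrable g volume x y :=
  hg.intervalIntegrable x y

/-! ### Signed area between the outer crossings of a level -/

lemma zero_pos_part {h : ℝ → ℝ} {x y t : ℝ} (hxy : x ≤ y)
    (hle : ∀ z ∈ Icc x y, h z ≤ t) : ∫ z in x..y, max (h z - t) 0 = 0 := by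
  rw [intervalIntegral.integral_congr (g := fun _ => (0 : ℝ))]
  · simp
  · intro z hz
    rw [uIcc_of_le hxy] at hz
    have := hle z hz
    simp only
    exact max_eq_right (by linarith)

lemma zero_neg_part {h : ℝ → ℝ} {x y t : ℝ} (hxy : x ≤ y)
    (hle : ∀ z ∈ Icc x y, t ≤ h z) : ∫ z in x..y, max (t - h z) 0 = 0 := by
  rw [intervalIntegral.integral_congr (g := fun _ => (0 : ℝ))]
  · simp
  · intro z hz
    rw [uIcc_of_le hxy] at hz
    have := hle z hz
    simp only
    exact max_eq_right (by linarith)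

/-- The signed area between the outer crossings `α`, `β` of level `t` is the area above the level
minus the area below it. The left end `α₀ ≤ α` and the right end `N ≥ β` do not depend on `t`, so
the right-hand side is visibly continuous in `t`. -/
lemma split (H : NShape h a b c d) {t α β α₀ N : ℝ} (hα : α < a) (hαt : h α = t)
    (hβ : d < β) (hβt : h β = t) (h0 : α₀ ≤ α) (hN : β ≤ N) :
    (∫ y in α..β, (h y - t)) =
      (∫ y in α₀..c, max (h y - t) 0) - ∫ y in b..N, max (t - h y) 0 := by
  have had := H.had
  have hta : t < h a := hαt ▸ H.mono_left hα.le (le_refl a) hα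
  have hdt : h d < t := hβt ▸ H.mono_right (le_refl d) hβ.le hβ
  have cp : Continuous fun y => max (h y - t) 0 := by have := H.cont; fun_prop
  have cn : Continuous fun y => max (t - h y) 0 := by have := H.cont; fun_prop
  have e : ∀ y, h y - t = max (h y - t) 0 - max (t - h y) 0 := by
    intro y
    rcases le_total (h y) t with hy | hy
    · rw [max_eq_right (by linarith), max_eq_left (by linarith)]; ring
    · rw [max_eq_left (by linarith), max_eq_right (by linarith)]; ring
  have hab := H.hab
  have hbc := H.hbc
  have hcd := H.hcd
  have z1 : ∫ y in α₀..α, max (h y - t) 0 = 0 := zero_pos_part h0 fun z hz => by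
    rw [← hαt]
    exact H.mono_left.monotoneOn (by simp; linarith [hz.2]) hα.le hz.2
  have z2 : ∫ y in c..β, max (h y - t) 0 = 0 := zero_pos_part (by linarith) fun z hz =>
    H.le_of_ge (by linarith) hz (by rw [H.hc]; exact hdt.le) hβt.le
  have z3 : ∫ y in β..N, max (t - h y) 0 = 0 := zero_neg_part hN fun z hz => by
    rw [← hβt]
    exact H.mono_right.monotoneOn hβ.le (by simp; linarith [hz.1]) hz.1
  have z4 : ∫ y in α..b, max (t - h y) 0 = 0 := zero_neg_part (by linarith) fun z hz =>
    H.ge_of_le (by linarith) hz hαt.ge (by rw [H.hb]; exact hta.le)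
  rw [intervalIntegral.integral_congr (fun y _ => e y),
    intervalIntegral.integral_sub (ii cp _ _) (ii cn _ _),
    ← intervalIntegral.integral_add_adjacent_intervals (ii cp α c) (ii cp c β),
    ← intervalIntegral.integral_add_adjacent_intervals (ii cp α₀ α) (ii cp α c),
    ← intervalIntegral.integral_add_adjacent_intervals (ii cn α b) (ii cn b β),
    ← intervalIntegral.integral_add_adjacent_intervals (ii cn b β) (ii cn β N), z1, z2, z3, z4]
  ring

/-- The signed area strictly decreases with the level. -/
lemma area_strictAnti (H : NShape h a b c d) {t α β t' α' β' : ℝ} (hα : α < a) (hαt : h α = t)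
    (hβ : d < β) (hβt : h β = t) (hα' : α' < a) (hαt' : h α' = t')
    (hβ' : d < β') (hβt' : h β' = t') (htt : t < t') :
    (∫ y in α'..β', (h y - t')) < ∫ y in α..β, (h y - t) := by
  have had := H.had
  have h1 : α < α' := by
    rw [← H.mono_left.lt_iff_lt hα.le hα'.le]; linarith
  have h2 : β < β' := by
    rw [← H.mono_right.lt_iff_lt hβ.le hβ'.le]; linarith
  have ct : ∀ s, Continuous fun y => h y - s := fun s => by have := H.cont; fun_prop
  have i1 : 0 ≤ ∫ y in α..α', (h y - t) := by
    refine intervalIntegral.integral_nonneg h1.le fun z hz => ?_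
    rw [sub_nonneg, ← hαt]
    exact H.mono_left.monotoneOn hα.le (by simp; linarith [hz.2]) hz.1
  have i2 : (∫ y in β..β', (h y - t')) ≤ 0 := by
    rw [← neg_nonneg, ← intervalIntegral.integral_neg]
    refine intervalIntegral.integral_nonneg h2.le fun z hz => ?_
    rw [neg_nonneg, sub_nonpos, ← hβt']
    exact H.mono_right.monotoneOn (by simp; linarith [hz.1]) hβ'.le hz.2
  have i3 : (∫ y in α'..β, (h y - t')) < ∫ y in α'..β, (h y - t) := by
    rw [← sub_pos, ← intervalIntegral.integral_sub (ii (ct _) _ _) (ii (ct _) _ _)]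
    refine intervalIntegral.intervalIntegral_pos_of_pos_on
      (ii ((ct _).sub (ct _)) _ _) (fun x _ => by linarith) (by linarith)
  rw [← intervalIntegral.integral_add_adjacent_intervals (ii (ct t) α α') (ii (ct t) α' β),
    ← intervalIntegral.integral_add_adjacent_intervals (ii (ct t') α' β) (ii (ct t') β β')]
  linarith

lemma zero_of_nonneg {g : ℝ → ℝ} (hg : Continuous g) {y z : ℝ} (hyz : y < z)
    (hn : ∀ x ∈ Icc y z, 0 ≤ g x) (hi : ∫ x in y..z, g x = 0) : ∀ x ∈ Icc y z, g x = 0 := by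
  by_contra hcon
  push Not at hcon
  obtain ⟨x, hx, hne⟩ := hcon
  have := intervalIntegral.integral_pos hyz hg.continuousOn
    (fun w hw => hn w ⟨hw.1.le, hw.2⟩) ⟨x, hx, lt_of_le_of_ne (hn x hx) hne.symm⟩
  linarith

/-- An interval with zero signed area on which `h` is not constant must start left of `a`. -/
lemma start_lt (H : NShape h a b c d) {y z : ℝ} (hyz : y < z) (he : h y = h z)
    (hi : ∫ x in y..z, (h x - h y) = 0) (hne : ∃ x ∈ Icc y z, h x ≠ h y) : y < a := by
  by_contra hcon
  push Not at hcon
  obtain ⟨x, hx, hne⟩ := hne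
  have hct := H.cont
  have := zero_of_nonneg (g := fun x => h y - h x) (by fun_prop) hyz
    (fun x hx => sub_nonneg.2 (H.le_of_ge hcon hx le_rfl he.ge)) (by
      rw [← neg_eq_zero, ← intervalIntegral.integral_neg]; simpa using hi) x hx
  exact hne (by linarith)

/-- Mirror image of `start_lt`. -/
lemma lt_end (H : NShape h a b c d) {y z : ℝ} (hyz : y < z) (he : h y = h z)
    (hi : ∫ x in y..z, (h x - h y) = 0) (hne : ∃ x ∈ Icc y z, h x ≠ h y) : d < z := by
  obtain ⟨x, hx, hne⟩ := hne
  have := H.reflect.start_lt (y := -z) (z := -y) (by linarith) (by simp [he]) (by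
      have e : ∀ x : ℝ, (-h (-x) - -h (- -z)) = -(fun x => h x - h y) (-x) := by
        intro x; simp [he]; ring
      rw [intervalIntegral.integral_congr (fun x _ => e x), intervalIntegral.integral_neg,
        intervalIntegral.integral_comp_neg (fun x => h x - h y)]
      simpa using hi)
    ⟨-x, ⟨by linarith [hx.2], by linarith [hx.1]⟩, by simpa [← he] using hne⟩
  linarith

/-! ### Existence of a level with zero signed area -/

lemma exists_left (H : NShape h a b c d) {hm : EReal}
    (hhm : Tendsto (fun x => (h x : EReal)) atBot (nhds hm)) {t : ℝ} (h1 : hm < t) (h2 : t < h a) :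
    ∃ α < a, h α = t := by
  obtain ⟨x, hxt, hxa⟩ := ((hhm.eventually_lt_const h1).and (eventually_lt_atBot a)).exists
  have hxt : h x < t := by exact_mod_cast hxt
  obtain ⟨α, hα, e⟩ := intermediate_value_Ioo hxa.le H.cont.continuousOn ⟨hxt, h2⟩
  exact ⟨α, hα.2, e⟩

lemma exists_right (H : NShape h a b c d) {hp : EReal}
    (hhp : Tendsto (fun x => (h x : EReal)) atTop (nhds hp)) {t : ℝ} (h1 : t < hp) (h2 : h d < t) :
    ∃ β, d < β ∧ h β = t := by
  obtain ⟨x, hxt, hxa⟩ := ((hhp.eventually_const_lt h1).and (eventually_gt_atTop d)).exists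
  have hxt : t < h x := by exact_mod_cast hxt
  obtain ⟨α, hα, e⟩ := intermediate_value_Ioo hxa.le H.cont.continuousOn ⟨h2, hxt⟩
  exact ⟨α, hα.1, e⟩

lemma lim_right (H : NShape h a b c d) {hp : EReal}
    (hhp : Tendsto (fun x => (h x : EReal)) atTop (nhds hp)) {β : ℝ} (hβ : d ≤ β) :
    (h β : EReal) < hp := by
  have : (h (β + 1) : EReal) ≤ hp := by
    refine ge_of_tendsto hhp ?_
    filter_upwards [eventually_ge_atTop (β + 1)] with x hx
    exact_mod_cast H.mono_right.monotoneOn (by simp; linarith) (by simp; linarith) hx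
  refine lt_of_lt_of_le ?_ this
  exact_mod_cast H.mono_right hβ (by simp; linarith) (by linarith)

lemma reflect_tendsto {hm : EReal} (hhm : Tendsto (fun x => (h x : EReal)) atBot (nhds hm)) :
    Tendsto (fun x => ((-h (-x) : ℝ) : EReal)) atTop (nhds (-hm)) := by
  simpa [Function.comp_def] using
    ((continuous_neg (G := EReal)).tendsto hm).comp (hhm.comp tendsto_neg_atTop_atBot)

lemma reflect_tendsto' {hp : EReal} (hhp : Tendsto (fun x => (h x : EReal)) atTop (nhds hp)) :
    Tendsto (fun x => ((-h (-x) : ℝ) : EReal)) atBot (nhds (-hp)) := by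
  simpa [Function.comp_def] using
    ((continuous_neg (G := EReal)).tendsto hp).comp (hhp.comp tendsto_neg_atBot_atTop)

lemma lim_left (H : NShape h a b c d) {hm : EReal}
    (hhm : Tendsto (fun x => (h x : EReal)) atBot (nhds hm)) {α : ℝ} (hα : α ≤ a) :
    hm < (h α : EReal) := by
  have := H.reflect.lim_right (reflect_tendsto hhm) (β := -α) (by linarith)
  simpa using this

lemma ofReal_integral {g : ℝ → ℝ} (hg : Continuous g) {x y : ℝ} (hxy : x ≤ y) :
    ENNReal.ofReal (∫ z in x..y, max (g z) 0) = ∫⁻ z in Ioc x y, ENNReal.ofReal (g z) := by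
  rw [intervalIntegral.integral_of_le hxy, ofReal_integral_eq_lintegral_ofReal]
  · simp
  · exact (intervalIntegrable_iff_integrableOn_Ioc_of_le hxy).1
      ((by fun_prop : Continuous fun z => max (g z) 0).intervalIntegrable x y)
  · exact Eventually.of_forall fun z => le_max_right _ _

/-- A negative total signed area to the right of `α`, at a level `L` crossed at `α`, is already
seen on a bounded interval: finitely much of the area below `L` outweighs the area above it. -/
lemma exists_far (H : NShape h a b c d) {L α : ℝ} (hα : α < a) (hαL : h α = L) (hLa : L < h a)
    (hA : (∫⁻ y in Set.Ioi α, ENNReal.ofReal (h y - L)) <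
        ∫⁻ y in Set.Ioi α, ENNReal.ofReal (L - h y)) :
    ∃ N, (∫ y in α..c, max (h y - L) 0) < ∫ y in b..N, max (L - h y) 0 := by
  have hct := H.cont
  have hab := H.hab
  have hbc := H.hbc
  have cover : AECover (volume.restrict (Ioi α)) atTop fun N : ℝ => Iic N :=
    aecover_Iic tendsto_id
  have lim := cover.lintegral_tendsto_of_countably_generated
    (f := fun y => ENNReal.ofReal (L - h y)) (by fun_prop)
  obtain ⟨N, hN, hNb⟩ := ((lim.eventually_const_lt hA).and (eventually_ge_atTop b)).exists
  refine ⟨N, ?_⟩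
  have z4 : ∫ y in α..b, max (L - h y) 0 = 0 := zero_neg_part (by linarith) fun z hz =>
    H.ge_of_le (by linarith [H.hcd]) hz hαL.ge (by rw [H.hb]; exact hLa.le)
  have cn : Continuous fun y => max (L - h y) 0 := by fun_prop
  have e1 := intervalIntegral.integral_add_adjacent_intervals (ii cn α b) (ii cn b N)
  rw [z4, zero_add] at e1
  rw [e1]
  have l1 : ENNReal.ofReal (∫ y in α..c, max (h y - L) 0) <
      ENNReal.ofReal (∫ y in α..N, max (L - h y) 0) := by
    rw [ofReal_integral (by fun_prop) (by linarith), ofReal_integral (by fun_prop) (by linarith)]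
    refine lt_of_le_of_lt (lintegral_mono_set Ioc_subset_Ioi_self) ?_
    rwa [Measure.restrict_restrict measurableSet_Iic, inter_comm, Ioi_inter_Iic] at hN
  exact (ENNReal.ofReal_lt_ofReal_iff'.1 l1).1

lemma continuous_area (hct : Continuous h) (p q r s : ℝ) : Continuous fun t : ℝ =>
    (∫ y in p..q, max (h y - t) 0) - (∫ y in r..s, max (t - h y) 0) := by
  refine Continuous.sub ?_ ?_
  · exact intervalIntegral.continuous_parametric_intervalIntegral_of_continuous'
      (f := fun t y => max (h y - t) 0) (by simp only [Function.uncurry_def]; fun_prop) _ _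
  · exact intervalIntegral.continuous_parametric_intervalIntegral_of_continuous'
      (f := fun t y => max (t - h y) 0) (by simp only [Function.uncurry_def]; fun_prop) _ _

/-- Some level above `c0` has negative signed area. At the upper end `L = min (h a) hp` of the
admissible levels the area is negative: trivially if `L = h a`, as nothing lies above the level,
and by `hA2` if `L = hp < h a`. Continuity in the level transfers this to levels just below
`L`. -/
lemma exists_neg (H : NShape h a b c d) {hp hm : EReal}
    (hhp : Tendsto (fun x => (h x : EReal)) atTop (nhds hp))
    (hhm : Tendsto (fun x => (h x : EReal)) atBot (nhds hm)) (hA1 : hm < hp)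
    (hA2 : ∀ L : ℝ, hp = (L : EReal) → L < h a → ∀ α : ℝ, α < a → h α = L →
      (∫⁻ y in Set.Ioi α, ENNReal.ofReal (h y - L)) <
        ∫⁻ y in Set.Ioi α, ENNReal.ofReal (L - h y)) {c0 : ℝ}
    (h1 : max ((h d : EReal)) hm < c0) (h2 : (c0 : EReal) < min ((h a : EReal)) hp) :
    ∃ t α β, c0 < t ∧ α < a ∧ h α = t ∧ d < β ∧ h β = t ∧ (∫ y in α..β, (h y - t)) < 0 := by
  have hct := H.cont
  have had := H.had
  have hdc : h d < c0 := by exact_mod_cast (max_lt_iff.1 h1).1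
  have hmc := (max_lt_iff.1 h1).2
  have hca : c0 < h a := by exact_mod_cast (lt_min_iff.1 h2).1
  have hcp := (lt_min_iff.1 h2).2
  obtain ⟨α₀, hα₀, hα₀c⟩ := H.exists_left hhm hmc hca
  -- `L` is the upper end of the admissible levels; truncation at `N` only drops area below `L`.
  obtain ⟨L, N, hcL, hLa, hLp, hF⟩ : ∃ L N : ℝ, c0 < L ∧ L ≤ h a ∧ (L : EReal) ≤ hp ∧
      (∫ y in α₀..c, max (h y - L) 0) - (∫ y in b..N, max (L - h y) 0) < 0 := by
    rcases le_or_gt (h a : EReal) hp with hap | hap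
    · refine ⟨h a, c, hca, le_rfl, hap, ?_⟩
      rw [zero_pos_part (by linarith [H.hab, H.hbc])]
      · rw [zero_sub, neg_lt_zero]
        refine intervalIntegral.integral_pos H.hbc (by fun_prop) (fun _ _ => le_max_right _ _)
          ⟨c, ⟨H.hbc.le, le_rfl⟩, ?_⟩
        rw [H.hc]
        exact lt_max_of_lt_left (by linarith [H.lt_top])
      · intro z hz
        rcases le_total z a with hza | hza
        · exact H.mono_left.monotoneOn hza (le_refl a) hza
        · exact H.antitoneOn ⟨le_rfl, had.le⟩ ⟨hza, hz.2.trans H.hcd⟩ hza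
    · lift hp to ℝ using ⟨hap.ne_top, (bot_le.trans_lt hA1).ne'⟩ with L
      have hcL : c0 < L := by exact_mod_cast hcp
      have hLa : L < h a := by exact_mod_cast hap
      obtain ⟨α, hα, hαL⟩ := H.exists_left hhm hA1 hLa
      obtain ⟨N, hN⟩ := H.exists_far hα hαL hLa (hA2 L rfl hLa α hα hαL)
      refine ⟨L, N, hcL, hLa.le, le_rfl, ?_⟩
      have hα' : α₀ ≤ α := by
        rw [← H.mono_left.le_iff_le hα₀.le hα.le]; linarith
      have z1 : ∫ y in α₀..α, max (h y - L) 0 = 0 := zero_pos_part hα' fun z hz => by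
        rw [← hαL]
        exact H.mono_left.monotoneOn (by simp; linarith [hz.2]) hα.le hz.2
      have cp : Continuous fun y => max (h y - L) 0 := by fun_prop
      rw [← intervalIntegral.integral_add_adjacent_intervals (ii cp α₀ α) (ii cp α c), z1]
      linarith
  have Fc : Continuous fun t : ℝ =>
      (∫ y in α₀..c, max (h y - t) 0) - (∫ y in b..N, max (t - h y) 0) :=
    continuous_area hct _ _ _ _
  have ev : ∀ᶠ t in nhdsWithin L (Iio L), c0 < t ∧ t < L ∧
      (∫ y in α₀..c, max (h y - t) 0) - (∫ y in b..N, max (t - h y) 0) < 0 := by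
    filter_upwards [nhdsWithin_le_nhds (lt_mem_nhds hcL), self_mem_nhdsWithin,
      nhdsWithin_le_nhds (Fc.continuousAt.eventually_lt_const hF)] with t a1 a2 a3
    exact ⟨a1, a2, a3⟩
  obtain ⟨t, hct', htL, hFt⟩ := ev.exists
  obtain ⟨α, hα, hαt⟩ := H.exists_left hhm
    (hmc.trans (by exact_mod_cast hct')) (htL.trans_le hLa)
  obtain ⟨β, hβ, hβt⟩ := H.exists_right hhp
    (lt_of_lt_of_le (by exact_mod_cast htL) hLp) (hdc.trans hct')
  refine ⟨t, α, β, hct', hα, hαt, hβ, hβt, ?_⟩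
  have hα' : α₀ ≤ α := by
    rw [← H.mono_left.le_iff_le hα₀.le hα.le]; linarith
  rw [H.split hα hαt hβ hβt hα' (le_max_right N β)]
  have cn : Continuous fun y => max (t - h y) 0 := by fun_prop
  have : 0 ≤ ∫ y in N..max N β, max (t - h y) 0 :=
    intervalIntegral.integral_nonneg (le_max_left _ _) fun _ _ => le_max_right _ _
  rw [← intervalIntegral.integral_add_adjacent_intervals (ii cn b N) (ii cn N _)]
  linarith

/-- Mirror image of `exists_neg`, at the lower end of the admissible levels. -/
lemma exists_pos (H : NShape h a b c d) {hp hm : EReal}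
    (hhp : Tendsto (fun x => (h x : EReal)) atTop (nhds hp))
    (hhm : Tendsto (fun x => (h x : EReal)) atBot (nhds hm)) (hA1 : hm < hp)
    (hA3 : ∀ L : ℝ, hm = (L : EReal) → h d < L → ∀ β : ℝ, d < β → h β = L →
      (∫⁻ y in Set.Iio β, ENNReal.ofReal (L - h y)) <
        ∫⁻ y in Set.Iio β, ENNReal.ofReal (h y - L)) {c0 : ℝ}
    (h1 : max ((h d : EReal)) hm < c0) (h2 : (c0 : EReal) < min ((h a : EReal)) hp) :
    ∃ t α β, t < c0 ∧ α < a ∧ h α = t ∧ d < β ∧ h β = t ∧ 0 < (∫ y in α..β, (h y - t)) := by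
  have key := H.reflect.exists_neg (reflect_tendsto hhm) (reflect_tendsto' hhp)
    (by simpa using hA1) (c0 := -c0) ?_ ?_ ?_
  · obtain ⟨t, α, β, k1, k2, k3, k4, k5, k6⟩ := key
    refine ⟨-t, -β, -α, by linarith, by linarith, by linarith, by linarith, by linarith, ?_⟩
    rw [← intervalIntegral.integral_comp_neg (fun y => h y - -t), ← neg_lt_zero,
      ← intervalIntegral.integral_neg]
    convert k6 using 3
    ring
  · intro L hL hLd α hα hαL
    have hneg : MeasurePreserving (fun x : ℝ => -x) volume volume :=
      Measure.measurePreserving_neg volume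
    have cv : ∀ g : ℝ → ENNReal, (∫⁻ y in Iio (-α), g y) = ∫⁻ y in Ioi α, g (-y) := by
      intro g
      rw [← hneg.setLIntegral_comp_preimage_emb (MeasurableEquiv.neg ℝ).measurableEmbedding]
      congr 2
      ext x; simp
    have := hA3 (-L) (by rw [EReal.coe_neg, ← hL, neg_neg]) (by simp at hLd; linarith) (-α)
      (by linarith) (by linarith)
    rw [cv, cv] at this
    convert this using 4 <;> ring_nf
  · rw [max_lt_iff]
    have := lt_min_iff.1 h2
    simpa using this
  · rw [lt_min_iff]
    have := max_lt_iff.1 h1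
    simpa using this

/-- By the intermediate value theorem some level has zero signed area between its outer
crossings. -/
lemma exists_zero (H : NShape h a b c d) {hp hm : EReal}
    (hhp : Tendsto (fun x => (h x : EReal)) atTop (nhds hp))
    (hhm : Tendsto (fun x => (h x : EReal)) atBot (nhds hm)) (hA1 : hm < hp)
    (hA2 : ∀ L : ℝ, hp = (L : EReal) → L < h a → ∀ α : ℝ, α < a → h α = L →
      (∫⁻ y in Set.Ioi α, ENNReal.ofReal (h y - L)) <
        ∫⁻ y in Set.Ioi α, ENNReal.ofReal (L - h y))
    (hA3 : ∀ L : ℝ, hm = (L : EReal) → h d < L → ∀ β : ℝ, d < β → h β = L →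
      (∫⁻ y in Set.Iio β, ENNReal.ofReal (L - h y)) <
        ∫⁻ y in Set.Iio β, ENNReal.ofReal (h y - L)) :
    ∃ t α β, α < a ∧ h α = t ∧ d < β ∧ h β = t ∧ (∫ y in α..β, (h y - t)) = 0 := by
  have hct := H.cont
  obtain ⟨c0, h1, h2⟩ : ∃ c0 : ℝ, max ((h d : EReal)) hm < c0 ∧
      (c0 : EReal) < min ((h a : EReal)) hp := by
    apply EReal.lt_iff_exists_real_btwn.1
    simp only [max_lt_iff, lt_min_iff]
    exact ⟨⟨by exact_mod_cast H.lt_top, H.lim_left hhm le_rfl⟩, H.lim_right hhp le_rfl, hA1⟩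
  obtain ⟨t, α, β, k1, k2, k3, k4, k5, k6⟩ := H.exists_pos hhp hhm hA1 hA3 h1 h2
  obtain ⟨t', α', β', k1', k2', k3', k4', k5', k6'⟩ := H.exists_neg hhp hhm hA1 hA2 h1 h2
  have hα : α ≤ α' := by rw [← H.mono_left.le_iff_le k2.le k2'.le]; linarith
  have hβ : β ≤ β' := by rw [← H.mono_right.le_iff_le k4.le k4'.le]; linarith
  have Fc : Continuous fun t : ℝ =>
      (∫ y in α..c, max (h y - t) 0) - (∫ y in b..β', max (t - h y) 0) :=
    continuous_area hct _ _ _ _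
  rw [H.split k2 k3 k4 k5 le_rfl hβ] at k6
  rw [H.split k2' k3' k4' k5' hα le_rfl] at k6'
  obtain ⟨s, hs, es⟩ := intermediate_value_Icc' (by linarith : t ≤ t') Fc.continuousOn
    ⟨k6'.le, k6.le⟩
  have e1 : h a > s := by
    have := H.mono_left k2'.le (le_refl a) k2'
    linarith [hs.2]
  have e2 : h d < s := by
    have := H.mono_right (le_refl d) k4.le k4
    linarith [hs.1]
  obtain ⟨x, hx, ex⟩ := H.exists_left hhm (t := s)
    (lt_of_lt_of_le (H.lim_left hhm k2.le) (by rw [k3]; exact_mod_cast hs.1)) e1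
  obtain ⟨z, hz, ez⟩ := H.exists_right hhp (t := s)
    (lt_of_le_of_lt (by rw [k5']; exact_mod_cast hs.2) (H.lim_right hhp k4'.le)) e2
  refine ⟨s, x, z, hx, ex, hz, ez, ?_⟩
  rw [H.split hx ex hz ez (α₀ := α) (N := β')]
  · exact es
  · rw [← H.mono_left.le_iff_le k2.le hx.le]; linarith [hs.1]
  · rw [← H.mono_right.le_iff_le hz.le k4'.le]; linarith [hs.2]

end NShape

/-! ### Absolute continuity -/

/-- `AbsCont` agrees with Mathlib's notion, which uses unordered half-open intervals. -/
lemma AbsCont_iff {F : ℝ → ℝ} {a b : ℝ} (hab : a ≤ b) :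
    AbsCont F a b ↔ AbsolutelyContinuousOnInterval F a b := by
  rw [absolutelyContinuousOnInterval_iff]
  constructor
  · intro H ε hε
    obtain ⟨δ, hδ, H⟩ := H ε hε
    refine ⟨δ, hδ, ?_⟩
    rintro ⟨n, I⟩ ⟨hE1, hE2⟩ hlen
    have key := H n (fun i => min (I i).1 (I i).2) (fun i => max (I i).1 (I i).2) ?_ ?_ ?_
    · rw [Finset.sum_range]
      refine lt_of_eq_of_lt (Finset.sum_congr rfl fun i _ => ?_) key
      rcases le_total (I i).1 (I i).2 with hi | hi
      · simp [hi, Real.dist_eq, abs_sub_comm]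
      · simp [hi, Real.dist_eq]
    · intro i
      have := hE1 i (Finset.mem_range.2 i.2)
      rw [uIcc_of_le hab] at this
      exact ⟨le_min this.1.1 this.2.1, min_le_max, max_le this.1.2 this.2.2⟩
    · intro i j hij
      exact (hE2 (by simp) (by simp) (by simpa [Fin.ext_iff] using hij)).mono
        Ioo_subset_Ioc_self Ioo_subset_Ioc_self
    · refine lt_of_eq_of_lt ?_ hlen
      rw [Finset.sum_range]
      refine Finset.sum_congr rfl fun i _ => ?_
      rw [max_sub_min_eq_abs, Real.dist_eq, abs_sub_comm]
  · intro H ε hε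
    obtain ⟨δ, hδ, H⟩ := H ε hε
    refine ⟨δ, hδ, ?_⟩
    intro n s t hst hdis hlen
    let I : ℕ → ℝ × ℝ := fun i => if hi : i < n then (s ⟨i, hi⟩, t ⟨i, hi⟩) else (0, 0)
    have hI : ∀ i : Fin n, I i = (s i, t i) := fun i => by simp [I]
    have key := H (n, I) ⟨?_, ?_⟩ ?_
    · rw [Finset.sum_range] at key
      refine lt_of_eq_of_lt (Finset.sum_congr rfl fun i _ => ?_) key
      simp only [hI]
      rw [dist_comm, Real.dist_eq]
    · intro i hi
      have hi := Finset.mem_range.1 hi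
      obtain ⟨h1, h2, h3⟩ := hst ⟨i, hi⟩
      simp only [hI ⟨i, hi⟩, uIcc_of_le hab]
      exact ⟨⟨h1, h2.trans h3⟩, h1.trans h2, h3⟩
    · intro i hi j hj hij
      have hi := Finset.mem_range.1 hi
      have hj := Finset.mem_range.1 hj
      have hd := hdis (i := ⟨i, hi⟩) (j := ⟨j, hj⟩) (by simpa [Fin.ext_iff] using hij)
      simp only [Function.onFun, hI ⟨i, hi⟩, hI ⟨j, hj⟩]
      rw [uIoc_of_le (hst ⟨i, hi⟩).2.1, uIoc_of_le (hst ⟨j, hj⟩).2.1]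
      simp only [Set.disjoint_left] at hd ⊢
      -- A common point of the half-open intervals yields a common point of the open ones.
      intro x hx hx'
      obtain ⟨y, hy1, hy2⟩ := exists_between (max_lt hx.1 hx'.1)
      rw [max_lt_iff] at hy1
      exact hd ⟨hy1.1, hy2.trans_le hx.2⟩ ⟨hy1.2, hy2.trans_le hx'.2⟩
    · rw [Finset.sum_range]
      refine lt_of_eq_of_lt (Finset.sum_congr rfl fun i _ => ?_) hlen
      simp only [hI]
      rw [dist_comm, Real.dist_eq, abs_of_nonneg (by linarith [(hst i).2.1])]

/-! ### The free boundary problem -/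

section FreeBoundary

variable {σ f h : ℝ → ℝ} {x1l x1r x2l x2r : ℝ}

lemma locInt_g (h23 : Cond23 f σ x1l x1r x2l x2r) :
    LocallyIntegrable (fun y => -2 * f y / (σ y) ^ 2) volume := by
  have := h23.1.smul (-2 : ℝ)
  refine (locallyIntegrable_congr (Eventually.of_forall fun y => ?_)).1 this
  simp only [Pi.smul_apply, smul_eq_mul]
  ring

lemma intInt_g (h23 : Cond23 f σ x1l x1r x2l x2r) (x y : ℝ) :
    IntervalIntegrable (fun y => -2 * f y / (σ y) ^ 2) volume x y :=
  intervalIntegrable_iff.mpr <|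
    ((locInt_g h23).integrableOn_isCompact isCompact_uIcc).mono_set uIoc_subset_uIcc

lemma h_sub (h23 : Cond23 f σ x1l x1r x2l x2r)
    (hh : ∀ x, h x = ∫ y in (0:ℝ)..x, -2 * f y / (σ y) ^ 2) (x y : ℝ) :
    h y - h x = ∫ z in x..y, -2 * f z / (σ z) ^ 2 := by
  rw [hh, hh, intervalIntegral.integral_interval_sub_left (intInt_g h23 _ _) (intInt_g h23 _ _)]

lemma nshape_h (hσ : ∀ x, σ x ≠ 0) (hf : Shape f x1l x1r x2l x2r)
    (h23 : Cond23 f σ x1l x1r x2l x2r)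
    (hh : ∀ x, h x = ∫ y in (0:ℝ)..x, -2 * f y / (σ y) ^ 2) :
    NShape h x1l x1r x2l x2r := by
  obtain ⟨h1, h2, h3, fpos, fzero, fneg⟩ := hf
  have sq : ∀ x, 0 < (σ x) ^ 2 := fun x => by have := hσ x; positivity
  have inc : ∀ x y, x < y → (∀ z ∈ Ioo x y, f z < 0) → h x < h y := by
    intro x y hxy hz
    rw [← sub_pos, h_sub h23 hh]
    refine intervalIntegral.intervalIntegral_pos_of_pos_on (intInt_g h23 _ _) (fun z hz' => ?_) hxy
    have := hz z hz'
    exact div_pos (by linarith) (sq z)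
  have dec : ∀ x y, x < y → (∀ z ∈ Ioo x y, 0 < f z) → h y < h x := by
    intro x y hxy hz
    rw [← neg_lt_neg_iff, ← sub_pos, neg_sub_neg, ← neg_sub, h_sub h23 hh,
      ← intervalIntegral.integral_neg]
    refine intervalIntegral.intervalIntegral_pos_of_pos_on (intInt_g h23 _ _).neg
      (fun z hz' => ?_) hxy
    have := hz z hz'
    rw [← neg_div]
    exact div_pos (by linarith) (sq z)
  have cst : ∀ x y, x ≤ y → (∀ z ∈ Icc x y, f z = 0) → h y = h x := by
    intro x y hxy hz
    rw [← sub_eq_zero, h_sub h23 hh,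
      intervalIntegral.integral_congr (g := fun _ => (0 : ℝ))]
    · simp
    · intro z hz'
      rw [uIcc_of_le hxy] at hz'
      simp [hz z hz']
  refine ⟨?_, h1, h2, h3, ?_, ?_, ?_, ?_, ?_⟩
  · rw [funext hh]
    exact intervalIntegral.continuous_primitive (fun x y => intInt_g h23 x y) 0
  · exact fun x hx y hy hxy => inc x y hxy fun z hz => fneg z (Or.inl (hz.2.trans_le hy))
  · exact fun x hx => cst _ _ hx.1 fun z hz => fzero z (Or.inl ⟨hz.1, hz.2.trans hx.2⟩)
  · exact fun x hx y hy hxy => dec x y hxy fun z hz =>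
      fpos z ⟨hx.1.trans_lt hz.1, hz.2.trans_le hy.2⟩
  · exact fun x hx => (cst _ _ hx.2 fun z hz => fzero z (Or.inr ⟨hx.1.trans hz.1, hz.2⟩)).symm
  · exact fun x hx y hy hxy => inc x y hxy fun z hz => fneg z (Or.inr (lt_of_le_of_lt hx hz.1))

/-- Zero signed area over an interval with `h = t` at both ends makes the primitive of `h - t`,
extended by zero, a solution. -/
lemma solution_of_area_zero (hσ : ∀ x, σ x ≠ 0) (h23 : Cond23 f σ x1l x1r x2l x2r)
    (hh : ∀ x, h x = ∫ y in (0:ℝ)..x, -2 * f y / (σ y) ^ 2) (hc : Continuous h)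
    {α β t : ℝ} (hαβ : α < β) (hα : h α = t) (hβ : h β = t)
    (hi : ∫ y in α..β, (h y - t) = 0) {V : ℝ → ℝ}
    (hV : ∀ x ∈ Ioo α β, V x = ∫ y in α..x, (h y - t)) (hV0 : ∀ x ∉ Ioo α β, V x = 0) :
    SolFBPZero σ f V α β := by
  have hV' : ∀ x ∈ Icc α β, V x = ∫ y in α..x, (h y - t) := by
    intro x hx
    by_cases hx' : x ∈ Ioo α β
    · exact hV x hx'
    · rw [hV0 x hx']
      rcases eq_endpoints_or_mem_Ioo_of_mem_Icc hx with rfl | rfl | hx''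
      · simp
      · exact hi.symm
      · exact absurd hx'' hx'
  refine ⟨hαβ, hV0, fun x => h x - t, ?_, by fun_prop, by simp [hα], by simp [hβ], ?_, ?_⟩
  · intro x hx
    refine HasDerivWithinAt.congr (HasDerivAt.hasDerivWithinAt ?_) hV' (hV' x hx)
    have c : Continuous fun y => h y - t := by fun_prop
    exact c.integral_hasStrictDerivAt α x |>.hasDerivAt
  · rw [AbsCont_iff hαβ.le]
    have := (intInt_g h23 α β).absolutelyContinuousOnInterval_intervalIntegral (c := α) (by simp)
    convert this using 1
    funext x
    rw [← h_sub h23 hh, hα]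
  · filter_upwards [LocallyIntegrable.ae_hasDerivAt_integral (locInt_g h23)] with x hx _
    refine ⟨-2 * f x / (σ x) ^ 2, ?_, ?_⟩
    · have := (hx 0).sub_const t
      simp_rw [← hh] at this
      exact this
    · have := hσ x
      field_simp

/-- Integrating the equation twice: the derivative of any solution on `[y1, y2]` is
`h - h y1`, so `h y2 = h y1` and the solution is the primitive of `h - h y1`. -/
lemma solution_deriv (hσ : ∀ x, σ x ≠ 0) (h23 : Cond23 f σ x1l x1r x2l x2r)
    (hh : ∀ x, h x = ∫ y in (0:ℝ)..x, -2 * f y / (σ y) ^ 2) (hc : Continuous h)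
    {W : ℝ → ℝ} {y1 y2 : ℝ} (hW : SolFBPZero σ f W y1 y2) :
    h y2 = h y1 ∧ (∀ x ∈ Icc y1 y2, W x = ∫ y in y1..x, (h y - h y1)) := by
  obtain ⟨hlt, hW0, W', hd, hcW, e1, e2, hac, hode⟩ := hW
  rw [AbsCont_iff hlt.le] at hac
  have hdW : ∀ x ∈ Icc y1 y2, W' x = h x - h y1 := by
    intro x hx
    have hac' : AbsolutelyContinuousOnInterval W' y1 x :=
      hac.mono (by rw [uIcc_of_le hx.1, uIcc_of_le hlt.le]; exact Icc_subset_Icc_right hx.2)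
    have := hac'.integral_deriv_eq_sub
    rw [e1, sub_zero] at this
    rw [← this, h_sub h23 hh]
    refine intervalIntegral.integral_congr_ae ?_
    have h₂ : ∀ᵐ z : ℝ, z ≠ y2 := by simp [ae_iff, measure_singleton]
    filter_upwards [hode, h₂] with z hz hz2 hzm
    rw [uIoc_of_le hx.1] at hzm
    obtain ⟨s, hs, hs'⟩ := hz ⟨hzm.1, lt_of_le_of_ne (hzm.2.trans hx.2) hz2⟩
    rw [hs.deriv]
    have := hσ z
    field_simp
    linarith
  refine ⟨?_, fun x hx => ?_⟩
  · have := hdW y2 ⟨hlt.le, le_rfl⟩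
    linarith
  · have hcon : ContinuousOn W (Icc y1 x) := fun z hz =>
      (hd z ⟨hz.1, hz.2.trans hx.2⟩).continuousWithinAt.mono (Icc_subset_Icc_right hx.2)
    have := intervalIntegral.integral_eq_sub_of_hasDerivAt_of_le (f := W)
      (f' := fun z => h z - h y1) hx.1 hcon (fun z hz => by
        have hz' : z ∈ Ioo y1 y2 := ⟨hz.1, hz.2.trans_le hx.2⟩
        have := (hd z (Ioo_subset_Icc_self hz')).hasDerivAt (Icc_mem_nhds hz'.1 hz'.2)
        rwa [hdW z (Ioo_subset_Icc_self hz')] at this)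
      ((by fun_prop : Continuous fun z => h z - h y1).intervalIntegrable _ _)
    rw [this, hW0 y1 (by simp), sub_zero]

end FreeBoundary

/-- **Theorem 3.1 (explicit solution).** Case `b ≡ 0`, `λ = 0`, under (A1)–(A3):
with `m1 = max(h(x2r), h(−∞))` and `m2 = min(h(x1ℓ), h(∞))` (in the extended reals),
there is `c* ∈ (m1, m2)` such that `∫_{α_{c*}}^{β_{c*}} (h(y) − c*) dy = 0`, and the triplet
`(V, α_{c*}, β_{c*})` with `V(x) = ∫_{α_{c*}}^x (h(y) − c*) dy` on `(α_{c*}, β_{c*})` and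
`V = 0` otherwise is the unique nontrivial solution of (2.11)–(2.14). -/
theorem thm31_explicit_solution
    (σ f : ℝ → ℝ) (hmσ : Measurable σ) (hmf : Measurable f) (hσ : ∀ x, σ x ≠ 0)
    (hσint : LocallyIntegrable (fun x => 1 / (σ x) ^ 2) volume)
    (x1l x1r x2l x2r : ℝ) (hf : Shape f x1l x1r x2l x2r)
    (h23 : Cond23 f σ x1l x1r x2l x2r)
    (h : ℝ → ℝ) (hh : ∀ x, h x = ∫ y in (0:ℝ)..x, -2 * f y / (σ y) ^ 2)
    (hp hm : EReal)
    (hhp : Tendsto (fun x => (h x : EReal)) atTop (nhds hp))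
    (hhm : Tendsto (fun x => (h x : EReal)) atBot (nhds hm))
    (hA1 : hm < hp)
    (hA2 : ∀ L : ℝ, hp = (L : EReal) → L < h x1l → ∀ α : ℝ, α < x1l → h α = L →
      (∫⁻ y in Set.Ioi α, ENNReal.ofReal (h y - L)) <
        ∫⁻ y in Set.Ioi α, ENNReal.ofReal (L - h y))
    (hA3 : ∀ L : ℝ, hm = (L : EReal) → h x2r < L → ∀ β : ℝ, x2r < β → h β = L →
      (∫⁻ y in Set.Iio β, ENNReal.ofReal (L - h y)) <
        ∫⁻ y in Set.Iio β, ENNReal.ofReal (h y - L)) :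
    ∃ cstar : ℝ,
      max ((h x2r : EReal)) hm < (cstar : EReal) ∧
      (cstar : EReal) < min ((h x1l : EReal)) hp ∧
      ∃ α β : ℝ, α < x1l ∧ h α = cstar ∧ x2r < β ∧ h β = cstar ∧
        (∫ y in α..β, (h y - cstar)) = 0 ∧
        ∃ V : ℝ → ℝ,
          (∀ x ∈ Set.Ioo α β, V x = ∫ y in α..x, (h y - cstar)) ∧
          (∀ x ∉ Set.Ioo α β, V x = 0) ∧
          SolFBPZero σ f V α β ∧ (∃ x, V x ≠ 0) ∧
          ∀ (W : ℝ → ℝ) (y1 y2 : ℝ), SolFBPZero σ f W y1 y2 → (∃ x, W x ≠ 0) →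
            y1 = α ∧ y2 = β ∧ ∀ x, W x = V x := by
  have H := nshape_h hσ hf h23 hh
  have hct := H.cont
  have had := H.had
  obtain ⟨t, α, β, hα, hαt, hβ, hβt, hi⟩ := H.exists_zero hhp hhm hA1 hA2 hA3
  have hta : t < h x1l := hαt ▸ H.mono_left hα.le (le_refl x1l) hα
  have hdt : h x2r < t := hβt ▸ H.mono_right (le_refl x2r) hβ.le hβ
  classical
  let V : ℝ → ℝ := fun x => if x ∈ Ioo α β then ∫ y in α..x, (h y - t) else 0
  have hV : ∀ x ∈ Ioo α β, V x = ∫ y in α..x, (h y - t) := fun x hx => if_pos hx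
  have hV0 : ∀ x ∉ Ioo α β, V x = 0 := fun x hx => if_neg hx
  have hαβ : α < β := by linarith
  refine ⟨t, max_lt (by exact_mod_cast hdt) (hαt ▸ H.lim_left hhm hα.le),
    lt_min (by exact_mod_cast hta) (hβt ▸ H.lim_right hhp hβ.le), α, β, hα, hαt, hβ, hβt, hi,
    V, hV, hV0, solution_of_area_zero hσ h23 hh hct hαβ hαt hβt hi hV hV0, ⟨x1l, ?_⟩, ?_⟩
  · rw [hV x1l ⟨hα, by linarith⟩]
    refine ne_of_gt (intervalIntegral.intervalIntegral_pos_of_pos_on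
      ((by fun_prop : Continuous fun y => h y - t).intervalIntegrable _ _) (fun x hx => ?_) hα)
    rw [sub_pos, ← hαt]
    exact H.mono_left hα.le hx.2.le hx.1
  · rintro W y1 y2 hW ⟨w, hw⟩
    obtain ⟨hy, hWx⟩ := solution_deriv hσ h23 hh hct hW
    have hlt : y1 < y2 := hW.1
    have hW0 := hW.2.1
    have hi' : ∫ y in y1..y2, (h y - h y1) = 0 := by
      rw [← hWx y2 ⟨hlt.le, le_rfl⟩, hW0 y2 (by simp)]
    have hwm : w ∈ Icc y1 y2 := by
      by_contra hcon
      exact hw (hW0 w fun hw' => hcon (Ioo_subset_Icc_self hw'))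
    have hne : ∃ x ∈ Icc y1 y2, h x ≠ h y1 := by
      by_contra! hcon
      refine hw ?_
      rw [hWx w hwm, intervalIntegral.integral_congr (g := fun _ => (0 : ℝ))]
      · simp
      · intro z hz
        rw [uIcc_of_le hwm.1] at hz
        simp [hcon z ⟨hz.1, hz.2.trans hwm.2⟩]
    have l1 := H.start_lt hlt hy.symm hi' hne
    have l2 := H.lt_end hlt hy.symm hi' hne
    have ht : h y1 = t := by
      rcases lt_trichotomy (h y1) t with hl | hl | hl
      · have := H.area_strictAnti l1 rfl l2 hy hα hαt hβ hβt hl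
        linarith
      · exact hl
      · have := H.area_strictAnti hα hαt hβ hβt l1 rfl l2 hy hl
        linarith
    obtain rfl : y1 = α := H.mono_left.injOn l1.le hα.le (ht.trans hαt.symm)
    obtain rfl : y2 = β := H.mono_right.injOn l2.le hβ.le ((hy.trans ht).trans hβt.symm)
    refine ⟨rfl, rfl, fun x => ?_⟩
    by_cases hx : x ∈ Ioo y1 y2
    · rw [hWx x (Ioo_subset_Icc_self hx), hV x hx, ht]
    · rw [hW0 x hx, hV0 x hx]
end
end

section
/- Assume b ≡ 0 and λ = 0 and that conditions (A1), (A2) and (A3) hold. Set m1 = max(h(x2r), h(−∞)) and m2 = min(h(x1ℓ), h(∞)). Then m1 < m2 and there exist real numbers c1, c2 with m1 < c1 < c2 < m2 such that ∫_{α_{c1}}^{β_{c1}} H(y, c1) dy > 0 and ∫_{α_{c2}}^{β_{c2}} H(y, c2) dy < 0. -/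
/-!
The primitive `h` is continuous, strictly increasing on `(-∞, x1l]`, nonincreasing on `[x1l, x2r]`
with `h x2r < h x1l`, and strictly increasing on `[x2r, ∞)`; this is `HShape`, and only this shape
matters. Since also `h(-∞) < h x1l`, `h x2r < h(∞)` and `h(-∞) < h(∞)`, the inequality `m1 < m2`
follows.

For `c2`, put `M = m2`. There are `A ≤ x1l` with `h A = M` and `R > x2r` with `h R < M` and
`∫_A^R (h - M) < 0`: if `M = h x1l`, take `A = x1l`, since then `h ≤ M` on `[A, R]`; if
`M = h(∞) < h x1l`, take `A = α_M` and truncate the integral in (A2) at a large `R`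
(`exists_truncation`). For `c < M` close to `M`, the point `β_c` lies beyond `R`, and `h ≤ c` on
`[R, β_c]`, so `∫_{α_c}^{β_c} (h - c) ≤ (M - c) (R - α_c) + ∫_A^R (h - M)`, which is negative once
`c` is near `M` (`core_neg`). Hence suitable `c2` exist arbitrarily close to `m2` (`exists_upper`).

The shape is preserved by `h ↦ -h(-·)`, which exchanges (A2) with (A3) and the two conclusions, so
`exists_upper` applied to the reflected function gives `c1` close to `m1`.
-/

open MeasureTheory Set Filter

noncomputable section

/-- The shape of the primitive: strictly increasing up to `a`, nonincreasing with a genuine drop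
between `a` and `b`, strictly increasing from `b` on. -/
structure HShape (h : ℝ → ℝ) (a b : ℝ) : Prop where
  cont : Continuous h
  left : StrictMonoOn h (Iic a)
  mid : AntitoneOn h (Icc a b)
  right : StrictMonoOn h (Ici b)
  lt : a < b
  drop : h b < h a

/-- Existence of the level point `α_c`. -/
lemma HShape.exists_alpha {h : ℝ → ℝ} {a b : ℝ} (H : HShape h a b) {hm : EReal}
    (hhm : Tendsto (fun x => (h x : EReal)) atBot (nhds hm)) {c : ℝ}
    (h1 : hm < c) (h2 : c < h a) : ∃ α < a, h α = c := by
  obtain ⟨x, hx, hxa⟩ :=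
    ((hhm.eventually (gt_mem_nhds h1)).and (eventually_lt_atBot a)).exists
  obtain ⟨y, hy, hyc⟩ := intermediate_value_Ioo hxa.le H.cont.continuousOn
    (show c ∈ Ioo (h x) (h a) from ⟨by exact_mod_cast hx, h2⟩)
  exact ⟨y, hy.2, hyc⟩

/-- Existence of the level point `β_c`. -/
lemma HShape.exists_beta {h : ℝ → ℝ} {a b : ℝ} (H : HShape h a b) {hp : EReal}
    (hhp : Tendsto (fun x => (h x : EReal)) atTop (nhds hp)) {c : ℝ}
    (h1 : h b < c) (h2 : (c : EReal) < hp) : ∃ β, b < β ∧ h β = c := by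
  obtain ⟨x, hx, hxb⟩ :=
    ((hhp.eventually (lt_mem_nhds h2)).and (eventually_gt_atTop b)).exists
  obtain ⟨y, hy, hyc⟩ := intermediate_value_Ioo hxb.le H.cont.continuousOn
    (show c ∈ Ioo (h b) (h x) from ⟨h1, by exact_mod_cast hx⟩)
  exact ⟨y, hy.1, hyc⟩

lemma HShape.lt_top {h : ℝ → ℝ} {a b : ℝ} (H : HShape h a b) {hp : EReal}
    (hhp : Tendsto (fun x => (h x : EReal)) atTop (nhds hp)) {y : ℝ} (hy : b ≤ y) :
    (h y : EReal) < hp := by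
  have h1 : h y < h (y + 1) :=
    H.right (mem_Ici.2 hy) (mem_Ici.2 (by linarith)) (by linarith)
  have h2 : (h (y + 1) : EReal) ≤ hp := by
    refine ge_of_tendsto hhp ?_
    filter_upwards [eventually_ge_atTop (y + 1)] with z hz
    exact_mod_cast H.right.monotoneOn (mem_Ici.2 (by linarith)) (mem_Ici.2 (by linarith)) hz
  exact lt_of_lt_of_le (by exact_mod_cast h1) h2

/-- The quantitative step: a negative truncated integral at level `M` yields a level
`c` in `(c0, M)` whose integral between its level points is negative. -/
lemma core_neg {h : ℝ → ℝ} {a b : ℝ} (H : HShape h a b) {hp hm : EReal}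
    (hhp : Tendsto (fun x => (h x : EReal)) atTop (nhds hp))
    (hhm : Tendsto (fun x => (h x : EReal)) atBot (nhds hm))
    {c0 M A R : ℝ} (hc0m : hm < c0) (hc0b : h b < c0) (hc0M : c0 < M)
    (hMa : M ≤ h a) (hMp : (M : EReal) ≤ hp) (hA : A ≤ a) (hAM : h A = M)
    (hR : b < R) (hRM : h R < M) (hI : ∫ y in A..R, (h y - M) < 0) :
    ∃ c : ℝ, c0 < c ∧ c < M ∧ ∃ α β : ℝ, α < a ∧ h α = c ∧ b < β ∧ h β = c ∧
      (∫ y in α..β, (h y - c)) < 0 := by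
  obtain ⟨α0, hα0, hα0c⟩ := H.exists_alpha hhm hc0m (hc0M.trans_le hMa)
  have hab := H.lt
  have hD : 0 < R - α0 := by linarith
  obtain ⟨c, hc1, hcM⟩ := exists_between
    (show max (max c0 (h R)) (M - (-∫ y in A..R, (h y - M)) / (R - α0)) < M from
      max_lt (max_lt hc0M hRM) (by
        have : 0 < (-∫ y in A..R, (h y - M)) / (R - α0) := div_pos (by linarith) hD
        linarith))
  rw [max_lt_iff, max_lt_iff] at hc1
  obtain ⟨⟨hc0c, hRc⟩, hcI⟩ := hc1
  have hcI' : (M - c) * (R - α0) < -∫ y in A..R, (h y - M) := by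
    rw [← lt_div_iff₀ hD]; linarith
  obtain ⟨α, hα, hαc⟩ := H.exists_alpha hhm (hc0m.trans (by exact_mod_cast hc0c))
    (hcM.trans_le hMa)
  obtain ⟨β, hβ, hβc⟩ := H.exists_beta hhp (hc0b.trans hc0c)
    (lt_of_lt_of_le (by exact_mod_cast hcM) hMp)
  refine ⟨c, hc0c, hcM, α, β, hα, hαc, hβ, hβc, ?_⟩
  have hα0α : α0 < α := (H.left.lt_iff_lt hα0.le hα.le).1 (by rw [hα0c, hαc]; exact hc0c)
  have hαA : α < A := (H.left.lt_iff_lt hα.le hA).1 (by rw [hAM, hαc]; exact hcM)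
  have hRβ : R < β := (H.right.lt_iff_lt hR.le hβ.le).1 (by rw [hβc]; exact hRc)
  have hint : ∀ d x y : ℝ, IntervalIntegrable (fun y => h y - d) volume x y := fun d x y =>
    (H.cont.sub continuous_const).intervalIntegrable x y
  rw [← intervalIntegral.integral_add_adjacent_intervals (hint c α A) (hint c A β),
    ← intervalIntegral.integral_add_adjacent_intervals (hint c A R) (hint c R β)]
  have e1 : ∫ y in α..A, (h y - c) ≤ (M - c) * (A - α) := by
    have := intervalIntegral.integral_mono_on (g := fun _ => M - c) hαA.le (hint c α A)
      intervalIntegrable_const (fun y hy => by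
        have : h y ≤ h A := H.left.monotoneOn (mem_Iic.2 (hy.2.trans hA)) hA hy.2
        linarith)
    rw [intervalIntegral.integral_const, smul_eq_mul] at this
    linarith
  have e2 : ∫ y in A..R, (h y - c) = (∫ y in A..R, (h y - M)) + (M - c) * (R - A) := by
    have : ∫ y in A..R, (h y - c) = ∫ y in A..R, ((h y - M) + (M - c)) := by
      congr 1; ext y; ring
    rw [this, intervalIntegral.integral_add (hint M A R) intervalIntegrable_const,
      intervalIntegral.integral_const, smul_eq_mul]
    ring
  have e3 : ∫ y in R..β, (h y - c) ≤ 0 := by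
    have := intervalIntegral.integral_mono_on (g := fun _ => (0 : ℝ)) hRβ.le (hint c R β)
      intervalIntegrable_const (fun y hy => by
        have : h y ≤ h β :=
          H.right.monotoneOn (mem_Ici.2 (hR.le.trans hy.1)) (mem_Ici.2 hβ.le) hy.2
        linarith)
    simpa using this
  have e4 : (M - c) * (R - α) ≤ (M - c) * (R - α0) :=
    mul_le_mul_of_nonneg_left (by linarith) (by linarith)
  nlinarith

/-- If the integral of `h - L` over `(A, ∞)` is negative (possibly `-∞`), so is the integral over
`(A, R]` for some `R` beyond any prescribed `b`. -/
lemma exists_truncation {h : ℝ → ℝ} (hc : Continuous h) {A L b : ℝ}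
    (hA2 : (∫⁻ y in Set.Ioi A, ENNReal.ofReal (h y - L)) <
        ∫⁻ y in Set.Ioi A, ENNReal.ofReal (L - h y)) :
    ∃ R, b < R ∧ ∫ y in A..R, (h y - L) < 0 := by
  have hcov := (aecover_Iic (μ := volume.restrict (Ioi A)) (tendsto_id (α := ℝ) (x := atTop)))
  have ht := hcov.lintegral_tendsto_of_countably_generated
    (f := fun y => ENNReal.ofReal (L - h y))
    ((continuous_const.sub hc).measurable.ennreal_ofReal.aemeasurable)
  obtain ⟨R, hR1, hRb, hRA⟩ := ((ht.eventually (lt_mem_nhds hA2)).and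
    ((eventually_gt_atTop b).and (eventually_gt_atTop A))).exists
  refine ⟨R, hRb, ?_⟩
  rw [Measure.restrict_restrict measurableSet_Iic, inter_comm, id, Ioi_inter_Iic] at hR1
  have hint : Integrable (fun y => h y - L) (volume.restrict (Ioc A R)) :=
    ((hc.sub continuous_const).integrableOn_Icc).mono_set Ioc_subset_Icc_self
  have hfin : ∫⁻ y in Ioc A R, ENNReal.ofReal (L - h y) ≠ ⊤ := by
    have := hint.neg.lintegral_lt_top
    simpa using this.ne
  have hlt := (lintegral_mono_set (μ := volume) (f := fun y => ENNReal.ofReal (h y - L))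
    (show Ioc A R ⊆ Ioi A from fun y hy => hy.1)).trans_lt hR1
  rw [intervalIntegral.integral_of_le hRA.le,
    integral_eq_lintegral_pos_part_sub_lintegral_neg_part hint]
  simp only [neg_sub]
  exact sub_neg.2 (ENNReal.toReal_strict_mono hfin hlt)

/-- Levels with negative integral exist between `m2` and any admissible level `c0`. -/
lemma exists_upper_s14 {h : ℝ → ℝ} {a b : ℝ} (H : HShape h a b) {hp hm : EReal}
    (hhp : Tendsto (fun x => (h x : EReal)) atTop (nhds hp))
    (hhm : Tendsto (fun x => (h x : EReal)) atBot (nhds hm))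
    (hA1 : hm < hp)
    (hA2 : ∀ L : ℝ, hp = (L : EReal) → L < h a → ∀ α : ℝ, α < a → h α = L →
      (∫⁻ y in Set.Ioi α, ENNReal.ofReal (h y - L)) <
        ∫⁻ y in Set.Ioi α, ENNReal.ofReal (L - h y))
    {c0 : ℝ} (hc0m : hm < c0) (hc0b : h b < c0) (hc0a : c0 < h a) (hc0p : (c0 : EReal) < hp) :
    ∃ c : ℝ, c0 < c ∧ c < h a ∧ (c : EReal) < hp ∧
      ∃ α β : ℝ, α < a ∧ h α = c ∧ b < β ∧ h β = c ∧ (∫ y in α..β, (h y - c)) < 0 := by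
  have hab := H.lt
  rcases le_or_gt (h a : EReal) hp with hcase | hcase
  · obtain ⟨R, hR, hRc⟩ := H.exists_beta hhp hc0b hc0p
    have hI : ∫ y in a..R, (h y - h a) < 0 := by
      have : 0 < ∫ y in a..R, (h a - h y) := by
        refine intervalIntegral.integral_pos (hab.trans hR)
          (continuous_const.sub H.cont).continuousOn (fun y hy => ?_)
          ⟨R, ⟨(hab.trans hR).le, le_rfl⟩, by linarith⟩
        rcases le_total y b with hyb | hyb
        · have := H.mid ⟨le_rfl, hab.le⟩ ⟨hy.1.le, hyb⟩ hy.1.le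
          linarith
        · have := H.right.monotoneOn (mem_Ici.2 hyb) (mem_Ici.2 hR.le) hy.2
          linarith
      have e : ∫ y in a..R, (h y - h a) = -∫ y in a..R, (h a - h y) := by
        rw [← intervalIntegral.integral_neg]; congr 1; ext y; ring
      linarith
    obtain ⟨c, h1, h2, h3⟩ := core_neg H hhp hhm hc0m hc0b hc0a le_rfl hcase le_rfl rfl hR
      (by linarith) hI
    exact ⟨c, h1, h2, lt_of_lt_of_le (by exact_mod_cast h2) hcase, h3⟩
  · lift hp to ℝ using ⟨(hcase.trans (EReal.coe_lt_top _)).ne, (bot_le.trans_lt hA1).ne'⟩ with L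
    have hLa : L < h a := by exact_mod_cast hcase
    obtain ⟨A, hA, hAL⟩ := H.exists_alpha hhm hA1 hLa
    obtain ⟨R, hR, hI⟩ := exists_truncation (b := b) H.cont (hA2 L rfl hLa A hA hAL)
    obtain ⟨c, h1, h2, h3⟩ := core_neg H hhp hhm hc0m hc0b (by exact_mod_cast hc0p) hLa.le le_rfl
      hA.le hAL hR (by exact_mod_cast H.lt_top hhp hR.le) hI
    exact ⟨c, h1, h2.trans hLa, by exact_mod_cast h2, h3⟩

/-- The shape is invariant under the point reflection `h ↦ -h(-·)`. -/
lemma HShape.reflect {h : ℝ → ℝ} {a b : ℝ} (H : HShape h a b) :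
    HShape (fun x => -h (-x)) (-b) (-a) where
  cont := (H.cont.comp continuous_neg).neg
  left := fun x hx y hy hxy => neg_lt_neg
    (H.right (mem_Ici.2 (by linarith [mem_Iic.1 hy])) (mem_Ici.2 (by linarith [mem_Iic.1 hx]))
      (neg_lt_neg hxy))
  mid := fun x hx y hy hxy => neg_le_neg
    (H.mid ⟨by linarith [hy.2], by linarith [hy.1]⟩ ⟨by linarith [hx.2], by linarith [hx.1]⟩
      (neg_le_neg hxy))
  right := fun x hx y hy hxy => neg_lt_neg
    (H.left (mem_Iic.2 (by linarith [mem_Ici.1 hy])) (mem_Iic.2 (by linarith [mem_Ici.1 hx]))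
      (neg_lt_neg hxy))
  lt := neg_lt_neg H.lt
  drop := by simpa using H.drop

lemma setLIntegral_Ioi_comp_neg (F : ℝ → ENNReal) (β : ℝ) :
    ∫⁻ y in Ioi (-β), F (-y) = ∫⁻ y in Iio β, F y := by
  have := (Measure.measurePreserving_neg (volume : Measure ℝ)).setLIntegral_comp_preimage_emb
    (MeasurableEquiv.neg ℝ).measurableEmbedding F (Iio β)
  rw [← this]
  congr 2
  ext y
  simp

/-- Levels with positive integral exist between `m1` and any admissible level `c0`. -/
lemma exists_lower {h : ℝ → ℝ} {a b : ℝ} (H : HShape h a b) {hp hm : EReal}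
    (hhp : Tendsto (fun x => (h x : EReal)) atTop (nhds hp))
    (hhm : Tendsto (fun x => (h x : EReal)) atBot (nhds hm))
    (hA1 : hm < hp)
    (hA3 : ∀ L : ℝ, hm = (L : EReal) → h b < L → ∀ β : ℝ, b < β → h β = L →
      (∫⁻ y in Set.Iio β, ENNReal.ofReal (L - h y)) <
        ∫⁻ y in Set.Iio β, ENNReal.ofReal (h y - L))
    {c0 : ℝ} (hc0m : hm < c0) (hc0b : h b < c0) (hc0a : c0 < h a) (hc0p : (c0 : EReal) < hp) :
    ∃ c : ℝ, c < c0 ∧ h b < c ∧ hm < (c : EReal) ∧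
      ∃ α β : ℝ, α < a ∧ h α = c ∧ b < β ∧ h β = c ∧ 0 < ∫ y in α..β, (h y - c) := by
  have t1 : Tendsto (fun x => ((-h (-x) : ℝ) : EReal)) atTop (nhds (-hm)) := by
    simp only [EReal.coe_neg]
    exact ((continuous_neg (G := EReal) |>.tendsto hm).comp (hhm.comp tendsto_neg_atTop_atBot))
  have t2 : Tendsto (fun x => ((-h (-x) : ℝ) : EReal)) atBot (nhds (-hp)) := by
    simp only [EReal.coe_neg]
    exact ((continuous_neg (G := EReal) |>.tendsto hp).comp (hhp.comp tendsto_neg_atBot_atTop))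
  obtain ⟨c, h1, h2, h3, α, β, hα, hαc, hβ, hβc, hI⟩ :=
    exists_upper_s14 H.reflect t1 t2 (EReal.neg_lt_neg_iff.2 hA1) (c0 := -c0)
    (fun L hL hLa α hα hαL => by
      have hm' : hm = ((-L : ℝ) : EReal) := by rw [EReal.coe_neg, ← hL, neg_neg]
      have key := hA3 (-L) hm' (by simp only [neg_neg] at hLa; linarith) (-α) (by linarith)
        (by linarith)
      rw [← setLIntegral_Ioi_comp_neg, ← setLIntegral_Ioi_comp_neg, neg_neg] at key
      convert key using 4 <;> ring)
    (by rw [EReal.coe_neg]; exact EReal.neg_lt_neg_iff.2 hc0p) (by simpa using hc0a)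
    (by simpa using hc0b) (by rw [EReal.coe_neg]; exact EReal.neg_lt_neg_iff.2 hc0m)
  simp only [neg_neg] at h2
  refine ⟨-c, by linarith, by linarith, ?_, -β, -α, by linarith, by linarith, by linarith,
    by linarith, ?_⟩
  · rw [EReal.coe_neg]; exact EReal.lt_neg_comm.1 h3
  · rw [← intervalIntegral.integral_comp_neg (fun y => h y - -c)]
    have e : ∫ y in α..β, (h (-y) - -c) = -∫ y in α..β, (-h (-y) - c) := by
      rw [← intervalIntegral.integral_neg]; congr 1; ext y; ring
    linarith

/-- The primitive of `-2 f / σ²` has the required shape. -/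
lemma hshape_of_shape {σ f : ℝ → ℝ} (hσ : ∀ x, σ x ≠ 0) {x1l x1r x2l x2r : ℝ}
    (hf : Shape f x1l x1r x2l x2r)
    (hint : LocallyIntegrable (fun x => f x / (σ x) ^ 2) volume)
    {h : ℝ → ℝ} (hh : ∀ x, h x = ∫ y in (0:ℝ)..x, -2 * f y / (σ y) ^ 2) :
    HShape h x1l x2r := by
  obtain ⟨h1, h12, h2, fpos, fzero, fneg⟩ := hf
  have gint : ∀ x y, IntervalIntegrable (fun y => -2 * f y / (σ y) ^ 2) volume x y := by
    intro x y
    have := ((hint.integrableOn_isCompact isCompact_uIcc).intervalIntegrable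
      (a := x) (b := y)).const_mul (-2)
    simpa only [mul_div_assoc] using this
  have hdiff : ∀ x y, h y - h x = ∫ t in x..y, -2 * f t / (σ t) ^ 2 := fun x y => by
    rw [hh, hh, intervalIntegral.integral_interval_sub_left (gint _ _) (gint _ _)]
  have hsq : ∀ x, 0 < σ x ^ 2 := fun x => by have := hσ x; positivity
  have hinc : ∀ x y, x < y → (∀ t ∈ Ioo x y, f t < 0) → h x < h y := by
    intro x y hxy hft
    have := intervalIntegral.intervalIntegral_pos_of_pos_on (gint x y)
      (fun t ht => div_pos (by linarith [hft t ht]) (hsq t)) hxy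
    linarith [hdiff x y]
  have hdec : ∀ x y, x < y → (∀ t ∈ Ioo x y, 0 < f t) → h y < h x := by
    intro x y hxy hft
    have := intervalIntegral.intervalIntegral_pos_of_pos_on (gint x y).neg
      (fun t ht => by
        simp only [Pi.neg_apply]
        rw [← neg_div]; exact div_pos (by linarith [hft t ht]) (hsq t)) hxy
    have e : ∫ t in x..y, (-fun y => -2 * f y / (σ y) ^ 2) t
        = -∫ t in x..y, -2 * f t / (σ t) ^ 2 := intervalIntegral.integral_neg
    linarith [hdiff x y]
  have fnn : ∀ t ∈ Icc x1l x2r, 0 ≤ f t := by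
    intro t ht
    rcases le_or_gt t x1r with ha | ha
    · exact (fzero t (Or.inl ⟨ht.1, ha⟩)).ge
    rcases le_or_gt x2l t with hb | hb
    · exact (fzero t (Or.inr ⟨hb, ht.2⟩)).ge
    · exact (fpos t ⟨ha, hb⟩).le
  have hmid : AntitoneOn h (Icc x1l x2r) := by
    intro x hx y hy hxy
    have := intervalIntegral.integral_mono_on (g := fun _ => (0 : ℝ)) hxy (gint x y)
      intervalIntegrable_const (fun t ht => div_nonpos_of_nonpos_of_nonneg
        (by linarith [fnn t ⟨hx.1.trans ht.1, ht.2.trans hy.2⟩]) (hsq t).le)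
    simp only [intervalIntegral.integral_zero] at this
    linarith [hdiff x y]
  refine ⟨?_, ?_, hmid, ?_, by linarith, ?_⟩
  · rw [funext hh]
    exact intervalIntegral.continuous_primitive gint 0
  · intro x _ y hy hxy
    exact hinc x y hxy (fun t ht => fneg t (Or.inl (ht.2.trans_le hy)))
  · intro x hx y _ hxy
    exact hinc x y hxy (fun t ht => fneg t (Or.inr (lt_of_le_of_lt hx ht.1)))
  · have a1 := hmid ⟨le_rfl, by linarith⟩ (⟨h1, by linarith⟩ : x1r ∈ Icc x1l x2r) h1
    have a2 := hdec x1r x2l h12 fpos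
    have a3 := hmid (⟨by linarith, h2⟩ : x2l ∈ Icc x1l x2r) ⟨by linarith, le_rfl⟩ h2
    linarith

/-- Case `b ≡ 0`, `λ = 0`, under (A1)–(A3): with `m1 = max(h(x2r), h(−∞))` and
`m2 = min(h(x1ℓ), h(∞))` one has `m1 < m2`, and there exist `c1, c2` with
`m1 < c1 < c2 < m2` such that `∫_{α_{c1}}^{β_{c1}} (h(y) − c1) dy > 0` and
`∫_{α_{c2}}^{β_{c2}} (h(y) − c2) dy < 0`. -/
theorem exists_c1_c2
    (σ f : ℝ → ℝ) (hmσ : Measurable σ) (hmf : Measurable f) (hσ : ∀ x, σ x ≠ 0)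
    (hσint : LocallyIntegrable (fun x => 1 / (σ x) ^ 2) volume)
    (x1l x1r x2l x2r : ℝ) (hf : Shape f x1l x1r x2l x2r)
    (h23 : Cond23 f σ x1l x1r x2l x2r)
    (h : ℝ → ℝ) (hh : ∀ x, h x = ∫ y in (0:ℝ)..x, -2 * f y / (σ y) ^ 2)
    (hp hm : EReal)
    (hhp : Tendsto (fun x => (h x : EReal)) atTop (nhds hp))
    (hhm : Tendsto (fun x => (h x : EReal)) atBot (nhds hm))
    (hA1 : hm < hp)
    (hA2 : ∀ L : ℝ, hp = (L : EReal) → L < h x1l → ∀ α : ℝ, α < x1l → h α = L →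
      (∫⁻ y in Set.Ioi α, ENNReal.ofReal (h y - L)) <
        ∫⁻ y in Set.Ioi α, ENNReal.ofReal (L - h y))
    (hA3 : ∀ L : ℝ, hm = (L : EReal) → h x2r < L → ∀ β : ℝ, x2r < β → h β = L →
      (∫⁻ y in Set.Iio β, ENNReal.ofReal (L - h y)) <
        ∫⁻ y in Set.Iio β, ENNReal.ofReal (h y - L)) :
    max ((h x2r : EReal)) hm < min ((h x1l : EReal)) hp ∧
    ∃ c1 c2 : ℝ,
      max ((h x2r : EReal)) hm < (c1 : EReal) ∧ c1 < c2 ∧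
      (c2 : EReal) < min ((h x1l : EReal)) hp ∧
      (∃ α β : ℝ, α < x1l ∧ h α = c1 ∧ x2r < β ∧ h β = c1 ∧
        0 < ∫ y in α..β, (h y - c1)) ∧
      (∃ α β : ℝ, α < x1l ∧ h α = c2 ∧ x2r < β ∧ h β = c2 ∧
        (∫ y in α..β, (h y - c2)) < 0) := by
  have H := hshape_of_shape hσ hf h23.1 hh
  have hbp : (h x2r : EReal) < hp := H.lt_top hhp le_rfl
  have hma : hm < (h x1l : EReal) := by
    have t2 : Tendsto (fun x => ((-h (-x) : ℝ) : EReal)) atTop (nhds (-hm)) := by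
      simp only [EReal.coe_neg]
      exact ((continuous_neg (G := EReal) |>.tendsto hm).comp (hhm.comp tendsto_neg_atTop_atBot))
    have := H.reflect.lt_top t2 le_rfl
    rw [neg_neg, EReal.coe_neg] at this
    exact EReal.neg_lt_neg_iff.1 this
  have hm12 : max ((h x2r : EReal)) hm < min ((h x1l : EReal)) hp :=
    max_lt (lt_min (by exact_mod_cast H.drop) hbp) (lt_min hma hA1)
  refine ⟨hm12, ?_⟩
  obtain ⟨c0, hc1, hc2⟩ := EReal.exists_between_coe_real hm12
  rw [max_lt_iff] at hc1
  rw [lt_min_iff] at hc2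
  have hb0 : h x2r < c0 := by exact_mod_cast hc1.1
  have ha0 : c0 < h x1l := by exact_mod_cast hc2.1
  obtain ⟨c2, h1, h2, h3, h4⟩ := exists_upper_s14 H hhp hhm hA1 hA2 hc1.2 hb0 ha0 hc2.2
  obtain ⟨c1, g1, g2, g3, g4⟩ := exists_lower H hhp hhm hA1 hA3 hc1.2 hb0 ha0 hc2.2
  exact ⟨c1, c2, max_lt (by exact_mod_cast g2) g3, g1.trans h1,
    lt_min (by exact_mod_cast h2) h3, g4, h4⟩
end
end
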